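/- arXiv:2409.12860 — 5 statements merged into one kernel-verified Lean document; each statement's English description precedes it below -/
import Mathlib

section
/- Let n ≥ 1 be an integer, let r_0 < r_1 < ... < r_n be real numbers, and let c_0, c_1, ..., c_n be non-zero complex numbers. Then the set of complex numbers z satisfying ∑_{k=0}^n c_k · exp(r_k · z) = 0 is infinite. -/
open Filter Topology Metric

def ExpSumAux.ExpType (f : ℂ → ℂ) : Prop :=
  ∃ A B : ℝ, 0 ≤ A ∧ 0 ≤ B ∧ ∀ z, ‖f z‖ ≤ A * Real.exp (B * ‖z‖)

theorem ExpSumAux.divide (a : ℂ) (f : ℂ → ℂ) (hf : Differentiable ℂ f)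
    (hE : ExpSumAux.ExpType f) (hne : ∃ z, f z ≠ 0) :
    ∃ (n : ℕ) (h : ℂ → ℂ), Differentiable ℂ h ∧ ExpSumAux.ExpType h ∧ h a ≠ 0 ∧
      ∀ z, f z = (z - a) ^ n * h z := by
  have hnev : ¬ ∀ᶠ z in 𝓝 a, f z = 0 := by
    intro hev
    obtain ⟨z, hz⟩ := hne
    have hA : AnalyticOnNhd ℂ f Set.univ := hf.differentiableOn.analyticOnNhd isOpen_univ
    exact hz (hA.eqOn_zero_of_preconnected_of_eventuallyEq_zero isPreconnected_univ
      (Set.mem_univ a) hev (Set.mem_univ z))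
  obtain ⟨n, g, hg, hga, hfg⟩ :=
    (hf.analyticAt a).exists_eventuallyEq_pow_smul_nonzero_iff.mpr hnev
  set h : ℂ → ℂ := Function.update (fun z => f z / (z - a) ^ n) a (g a) with hh
  have hha : h a = g a := by simp [hh]
  have hhz : ∀ z, z ≠ a → h z = f z / (z - a) ^ n := fun z hz => by simp [hh, hz]
  have hloc : h =ᶠ[𝓝 a] g := by
    filter_upwards [hfg] with z hz
    by_cases hza : z = a
    · rw [hza, hha]
    · have : (z - a) ^ n ≠ 0 := pow_ne_zero _ (sub_ne_zero.mpr hza)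
      rw [hhz z hza, hz, smul_eq_mul]
      field_simp
  have hd : Differentiable ℂ h := by
    intro z
    by_cases hza : z = a
    · rw [hza]
      exact hg.differentiableAt.congr_of_eventuallyEq hloc
    · have h1 : DifferentiableAt ℂ (fun z => f z / (z - a) ^ n) z :=
        (hf z).div (by fun_prop) (pow_ne_zero _ (sub_ne_zero.mpr hza))
      refine h1.congr_of_eventuallyEq ?_
      filter_upwards [isOpen_ne.mem_nhds hza] with w hw
      exact hhz w hw
  refine ⟨n, h, hd, ?_, by rwa [hha], ?_⟩
  · obtain ⟨A, B, hA, hB, hb⟩ := hE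
    obtain ⟨K, hK⟩ := (isCompact_closedBall a 1).exists_bound_of_continuousOn
      hd.continuous.continuousOn
    have hK0 : 0 ≤ K := (norm_nonneg _).trans (hK a (by simp))
    refine ⟨A + K, B, by positivity, hB, fun z => ?_⟩
    have he : 1 ≤ Real.exp (B * ‖z‖) := Real.one_le_exp (by positivity)
    by_cases hz : z ∈ closedBall a 1
    · have := hK z hz
      nlinarith
    · have h1 : 1 < ‖z - a‖ := by
        simpa [mem_closedBall, dist_eq_norm] using hz
      have hza : z ≠ a := by
        rintro rfl
        simp at h1
        linarith
      rw [hhz z hza, norm_div, norm_pow]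
      have h2 : 1 ≤ ‖z - a‖ ^ n := one_le_pow₀ h1.le
      have := div_le_self (norm_nonneg (f z)) h2
      have := hb z
      nlinarith
  · intro z
    by_cases hza : z = a
    · have := hfg.self_of_nhds
      rw [hza, hha, this, smul_eq_mul]
    · have : (z - a) ^ n ≠ 0 := pow_ne_zero _ (sub_ne_zero.mpr hza)
      rw [hhz z hza]
      field_simp

theorem ExpSumAux.factor (s : Finset ℂ) : ∀ f : ℂ → ℂ, Differentiable ℂ f →
    ExpSumAux.ExpType f → (∃ z, f z ≠ 0) → (∀ z, f z = 0 → z ∈ s) →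
    ∃ (P : Polynomial ℂ) (h : ℂ → ℂ), Differentiable ℂ h ∧ ExpSumAux.ExpType h ∧
      (∀ z, h z ≠ 0) ∧ ∀ z, f z = P.eval z * h z := by
  classical
  induction s using Finset.induction_on with
  | empty =>
    intro f hf hE _ hz
    exact ⟨1, f, hf, hE, fun z h => by simpa using hz z h, by simp⟩
  | insert a s ha ih =>
    intro f hf hE hne hz
    obtain ⟨n, h, hd, hhE, hha, hfh⟩ := ExpSumAux.divide a f hf hE hne
    obtain ⟨P, k, hk, hkE, hk0, hP⟩ := ih h hd hhE ⟨a, hha⟩ (fun z hz0 => by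
      have h1 := hz z (by rw [hfh, hz0, mul_zero])
      rcases Finset.mem_insert.mp h1 with h2 | h2
      · exact absurd (h2 ▸ hz0) hha
      · exact h2)
    refine ⟨(Polynomial.X - Polynomial.C a) ^ n * P, k, hk, hkE, hk0, fun z => ?_⟩
    rw [hfh, hP]
    simp [mul_assoc]

theorem ExpSumAux.nonvanishing (h : ℂ → ℂ) (hd : Differentiable ℂ h)
    (hE : ExpSumAux.ExpType h) (h0 : ∀ z, h z ≠ 0) :
    ∃ a b : ℂ, ∀ z, h z = Complex.exp (a * z + b) := by
  have hd' : Differentiable ℂ (deriv h) := by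
    have := hd.differentiableOn.deriv isOpen_univ
    exact differentiableOn_univ.mp this
  obtain ⟨g, hg0, hg⟩ := (Differentiable.isExactOn_univ (hd'.div hd h0)).with_val_at 0
    (Complex.log (h 0))
  have hg' : ∀ z, HasDerivAt g (deriv h z / h z) z := fun z => hg z (Set.mem_univ z)
  have hgd : Differentiable ℂ g := fun z => (hg' z).differentiableAt
  have hexp : ∀ z, h z = Complex.exp (g z) := by
    have hq : ∀ z, HasDerivAt (fun z => h z * Complex.exp (-g z)) 0 z := by
      intro z
      have := (hd z).hasDerivAt.mul ((hg' z).neg.cexp)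
      refine this.congr_deriv ?_
      have := h0 z
      field_simp
      simp
    intro z
    have h1 := is_const_of_deriv_eq_zero (fun z => (hq z).differentiableAt)
      (fun z => (hq z).deriv) z 0
    have h2 : h 0 * Complex.exp (-g 0) = 1 := by
      rw [hg0, Complex.exp_neg, Complex.exp_log (h0 0)]
      exact mul_inv_cancel₀ (h0 0)
    have h3 : h z * Complex.exp (-g z) = 1 := h1.trans h2
    rw [Complex.exp_neg] at h3
    exact (mul_inv_eq_one₀ (Complex.exp_ne_zero _)).mp h3
  obtain ⟨A, B, hA, hB, hb⟩ := hE
  have hre : ∀ z, (g z).re ≤ A + B * ‖z‖ := by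
    intro z
    have h1 := hb z
    rw [hexp, Complex.norm_exp] at h1
    have h2 : A ≤ Real.exp A := by linarith [Real.add_one_le_exp A]
    rw [← Real.exp_le_exp, Real.exp_add]
    exact h1.trans (by gcongr)
  have hlin : ∀ z, ‖g z‖ ≤ (2 * (A + 1 + B) + 3 * ‖g 0‖) + 4 * B * ‖z‖ := by
    intro z
    have hM : 0 < A + 1 + B * (2 * ‖z‖ + 1) := by positivity
    have hR : 0 < 2 * ‖z‖ + 1 := by positivity
    have h1 := Complex.borelCaratheodory (f := g) (R := 2 * ‖z‖ + 1) (z := z) hM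
      hgd.differentiableOn (fun w hw => by
        have hw' : ‖w‖ < 2 * ‖z‖ + 1 := by simpa using hw
        have h2 := hre w
        have h3 := mul_le_mul_of_nonneg_left hw'.le hB
        show (g w).re ≤ _
        linarith) hR (by simp; linarith [norm_nonneg z])
    have hz := norm_nonneg z
    have hg := norm_nonneg (g 0)
    have e : 2 * ‖z‖ + 1 - ‖z‖ = ‖z‖ + 1 := by ring
    rw [e, ← add_div, le_div_iff₀ (by positivity)] at h1
    have h5 : ‖g z‖ * (‖z‖ + 1) ≤
        ((2 * (A + 1 + B) + 3 * ‖g 0‖) + 4 * B * ‖z‖) * (‖z‖ + 1) := by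
      refine h1.trans ?_
      nlinarith [mul_nonneg hB hz]
    exact le_of_mul_le_mul_right h5 (by positivity)
  set C := 2 * (A + 1 + B) + 3 * ‖g 0‖ with hC
  have hC0 : 0 ≤ C := by positivity
  have hdb : ∀ z, ‖deriv g z‖ ≤ C + 8 * B := by
    intro z
    have h1 := Complex.norm_deriv_le_of_forall_mem_sphere_norm_le (f := g) (c := z)
      (R := ‖z‖ + 1) (C := (C + 8 * B) * (‖z‖ + 1)) (by positivity) hgd.diffContOnCl
      (fun w hw => by
        have hw' : ‖w - z‖ = ‖z‖ + 1 := by simpa [dist_eq_norm] using hw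
        have h2 : ‖w‖ ≤ 2 * ‖z‖ + 1 := by
          have := norm_add_le (w - z) z
          simp at this
          linarith
        have h3 := hlin w
        have h4 := mul_le_mul_of_nonneg_left h2 hB
        nlinarith [mul_nonneg hB (norm_nonneg z), mul_nonneg hC0 (norm_nonneg z)])
    rwa [mul_div_cancel_right₀ _ (by positivity)] at h1
  have hgd' : Differentiable ℂ (deriv g) := by
    have := hgd.differentiableOn.deriv isOpen_univ
    exact differentiableOn_univ.mp this
  have hbd : Bornology.IsBounded (Set.range (deriv g)) := by
    rw [isBounded_iff_forall_norm_le]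
    exact ⟨C + 8 * B, by rintro _ ⟨z, rfl⟩; exact hdb z⟩
  have hconst : ∀ z, deriv g z = deriv g 0 := fun z => hgd'.apply_eq_apply_of_bounded hbd z 0
  refine ⟨deriv g 0, g 0, fun z => ?_⟩
  have hq : ∀ z, HasDerivAt (fun z => g z - deriv g 0 * z) 0 z := by
    intro z
    have h1 := (hgd z).hasDerivAt.sub ((hasDerivAt_id z).const_mul (deriv g 0))
    refine h1.congr_deriv ?_
    rw [hconst z]
    simp
  have h1 := is_const_of_deriv_eq_zero (fun z => (hq z).differentiableAt)
      (fun z => (hq z).deriv) z 0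
  simp only [mul_zero, sub_zero] at h1
  rw [hexp, ← h1]
  congr 1
  ring

theorem ExpSumAux.poly_decay (P : Polynomial ℂ) (ε d : ℝ) (hε : |ε| = 1) (hd : 0 < d) :
    Tendsto (fun x : ℝ => ‖P.eval ((ε * x : ℝ) : ℂ)‖ * Real.exp (-(d * x))) atTop (𝓝 0) := by
  induction P using Polynomial.induction_on' with
  | add p q hp hq =>
    have h := hp.add hq
    rw [add_zero] at h
    refine squeeze_zero (fun x => by positivity) (fun x => ?_) h
    rw [Polynomial.eval_add, ← add_mul]
    gcongr
    exact norm_add_le _ _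
  | monomial n a =>
    have h1 := (Real.tendsto_pow_mul_exp_neg_atTop_nhds_zero n).comp
      (tendsto_id.const_mul_atTop hd)
    have h2 := h1.const_mul (‖a‖ / d ^ n)
    rw [mul_zero] at h2
    refine h2.congr' ?_
    filter_upwards [eventually_ge_atTop 0] with x hx
    simp only [Function.comp, id, Polynomial.eval_monomial, norm_mul, norm_pow,
      Complex.norm_real, Real.norm_eq_abs, hε, one_mul, abs_of_nonneg hx]
    field_simp
    ring

/-- the leading term along a real direction -/
theorem ExpSumAux.leading (n : ℕ) (r : Fin (n + 1) → ℝ) (c : Fin (n + 1) → ℂ) (ε : ℝ)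
    (j : Fin (n + 1)) (hj : ∀ k, k ≠ j → ε * r k < ε * r j) :
    Tendsto (fun x : ℝ => (∑ k, c k * Complex.exp (r k * ((ε * x : ℝ) : ℂ))) *
      Complex.exp (-(r j * ((ε * x : ℝ) : ℂ)))) atTop (𝓝 (c j)) := by
  have h : ∀ k, Tendsto (fun x : ℝ => c k * Complex.exp (r k * ((ε * x : ℝ) : ℂ)) *
      Complex.exp (-(r j * ((ε * x : ℝ) : ℂ)))) atTop (𝓝 (if k = j then c k else 0)) := by
    intro k
    split_ifs with hk
    · subst hk
      refine tendsto_const_nhds.congr fun x => ?_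
      rw [mul_assoc, ← Complex.exp_add, add_neg_cancel, Complex.exp_zero, mul_one]
    · have hpos : 0 < ε * r j - ε * r k := sub_pos.mpr (hj k hk)
      have h1 := (Real.tendsto_exp_neg_atTop_nhds_zero.comp
        (tendsto_id.const_mul_atTop hpos)).const_mul ‖c k‖
      rw [mul_zero] at h1
      rw [tendsto_zero_iff_norm_tendsto_zero]
      refine h1.congr fun x => ?_
      rw [mul_assoc, ← Complex.exp_add, norm_mul, Complex.norm_exp]
      simp only [Function.comp, id]
      congr 2
      simp
      ring
  have h2 := tendsto_finsetSum Finset.univ (fun k _ => h k)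
  simp only [Finset.sum_ite_eq', Finset.mem_univ, if_true] at h2
  refine h2.congr fun x => ?_
  rw [Finset.sum_mul]

theorem ExpSumAux.exponent (n : ℕ) (r : Fin (n + 1) → ℝ) (c : Fin (n + 1) → ℂ)
    (hc : ∀ k, c k ≠ 0) (ε : ℝ) (hε : |ε| = 1)
    (j : Fin (n + 1)) (hj : ∀ k, k ≠ j → ε * r k < ε * r j)
    (P : Polynomial ℂ) (a b : ℂ)
    (hP : ∀ z, ∑ k, c k * Complex.exp (r k * z) = P.eval z * Complex.exp (a * z + b)) :
    ε * r j ≤ ε * a.re := by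
  by_contra! hlt
  have h1 := (ExpSumAux.leading n r c ε j hj).norm
  have h2 := (ExpSumAux.poly_decay P ε (ε * r j - ε * a.re) hε (sub_pos.mpr hlt)).const_mul
    (Real.exp b.re)
  rw [mul_zero] at h2
  have h3 : ‖c j‖ = 0 := by
    refine tendsto_nhds_unique h1 (h2.congr fun x => ?_)
    rw [hP, norm_mul, norm_mul, Complex.norm_exp, Complex.norm_exp, mul_left_comm, mul_assoc,
      ← Real.exp_add, ← Real.exp_add]
    congr 2
    simp
    ring
  exact hc j (norm_eq_zero.mp h3)

/-- Exponential sums in one variable have infinitely many zeroes. -/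
theorem exp_sum_infinite_zeroes (n : ℕ) (hn : 1 ≤ n)
    (r : Fin (n + 1) → ℝ) (hr : StrictMono r)
    (c : Fin (n + 1) → ℂ) (hc : ∀ k, c k ≠ 0) :
    {z : ℂ | ∑ k, c k * Complex.exp (r k * z) = 0}.Infinite := by
  intro hfin
  have hlast : ∀ k, k ≠ Fin.last n → (1 : ℝ) * r k < 1 * r (Fin.last n) := fun k hk => by
    rw [one_mul, one_mul]
    exact hr (Fin.lt_last_iff_ne_last.mpr hk)
  have hzero : ∀ k, k ≠ 0 → (-1 : ℝ) * r k < -1 * r 0 := fun k hk => by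
    have := hr (Fin.pos_iff_ne_zero.mpr hk)
    linarith
  have hE : ExpSumAux.ExpType (fun z => ∑ k, c k * Complex.exp (r k * z)) := by
    refine ⟨∑ k, ‖c k‖, ∑ k, |r k|, by positivity, by positivity, fun z => ?_⟩
    rw [Finset.sum_mul]
    refine (norm_sum_le _ _).trans (Finset.sum_le_sum fun k _ => ?_)
    rw [norm_mul]
    refine mul_le_mul_of_nonneg_left ?_ (norm_nonneg _)
    refine (Complex.norm_exp_le_exp_norm _).trans (Real.exp_le_exp.mpr ?_)
    rw [norm_mul, Complex.norm_real, Real.norm_eq_abs]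
    exact mul_le_mul_of_nonneg_right
      (Finset.single_le_sum (f := fun k => |r k|) (fun i _ => abs_nonneg _) (Finset.mem_univ k))
      (norm_nonneg _)
  have hne : ∃ z, ∑ k, c k * Complex.exp (r k * z) ≠ 0 := by
    by_contra! hall
    have h1 := ExpSumAux.leading n r c 1 (Fin.last n) hlast
    simp only [hall, zero_mul] at h1
    exact hc _ (tendsto_nhds_unique tendsto_const_nhds h1).symm
  obtain ⟨P, h, hd, hhE, h0, hP⟩ := ExpSumAux.factor hfin.toFinset
    (fun z => ∑ k, c k * Complex.exp (r k * z)) (by fun_prop) hE hne (fun z hz => by simpa using hz)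
  obtain ⟨a, b, hab⟩ := ExpSumAux.nonvanishing h hd hhE h0
  have hP' : ∀ z, ∑ k, c k * Complex.exp (r k * z) = P.eval z * Complex.exp (a * z + b) :=
    fun z => by rw [← hab]; exact hP z
  have h1 := ExpSumAux.exponent n r c hc 1 (by simp) _ hlast P a b hP'
  have h2 := ExpSumAux.exponent n r c hc (-1) (by simp) _ hzero P a b hP'
  have h3 : r 0 < r (Fin.last n) := hr (by rw [Fin.lt_def]; simp; omega)
  linarith
end

section
/- Let U ⊆ ℂ be a nonempty open connected set and let f_1, ..., f_n : U → ℂ be holomorphic functions such that no non-trivial ℚ-linear combination of f_1, ..., f_n is constant on U (i.e., if q_1, ..., q_n ∈ ℚ are not all zero then q_1 f_1 + ... + q_n f_n is non-constant on U). Then the transcendence degree over ℂ of the ℂ-subalgebra of functions on U generated by f_1, ..., f_n, exp∘f_1, ..., exp∘f_n is at least n; equivalently, some n of the 2n functions f_1, ..., f_n, exp∘f_1, ..., exp∘f_n are algebraically independent over ℂ. -/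
open Polynomial

/-- Extension of derivations along formally etale maps. -/
lemma ax_exists_extension {R A B : Type*} [CommRing R] [CommRing A] [CommRing B] [Algebra R A]
    [Algebra R B] [Algebra A B] [IsScalarTower R A B] [Algebra.FormallyEtale A B]
    (d : Derivation R A B) :
    ∃ D : Derivation R B B, ∀ a, D (algebraMap A B a) = d a := by
  let φ : TensorProduct A B (Ω[A⁄R]) →ₗ[B] B := LinearMap.liftBaseChange B d.liftKaehlerDifferential
  let e := (KaehlerDifferential.tensorKaehlerEquivOfFormallyEtale R A B).symm
  refine ⟨(φ.comp e.toLinearMap).compDer (KaehlerDifferential.D R B), fun a => ?_⟩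
  have := KaehlerDifferential.tensorKaehlerEquivOfFormallyEtale_symm_D_algebraMap R A B a
  simp [φ, e, this]

/-- A derivation killing a subring kills everything algebraic over it. -/
lemma ax_der_algebraic {R A K : Type*} [CommRing R] [CommRing A] [IsDomain A] [Field K] [CharZero K]
    [Algebra R K] [Algebra A K] [FaithfulSMul A K] (D : Derivation R K K)
    (hD : ∀ a : A, D (algebraMap A K a) = 0) (x : K) (hx : IsAlgebraic A x) : D x = 0 := by
  classical
  have hinj : Function.Injective (algebraMap A K) := FaithfulSMul.algebraMap_injective A K
  have : CharZero A := (RingHom.charZero_iff hinj).2 inferInstance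
  let D' : Derivation A K K :=
    Derivation.mk' { toFun := D, map_add' := by simp, map_smul' := by
                      intro a y; simp [Algebra.smul_def, hD] } (by intro a b; simp)
  have hD' : ∀ y, D' y = D y := fun y => rfl
  have hex : ∃ n, ∃ p : A[X], p ≠ 0 ∧ aeval x p = 0 ∧ p.natDegree = n := by
    obtain ⟨p, h1, h2⟩ := hx
    exact ⟨_, p, h1, h2, rfl⟩
  obtain ⟨p, hp0, hpx, hpn⟩ := Nat.find_spec hex
  have hmin := fun m => @Nat.find_min _ _ hex m
  have key : aeval x (derivative p) * D x = 0 := by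
    have := Derivation.map_aeval D' p x
    rw [hpx, map_zero, smul_eq_mul, hD'] at this
    exact this.symm
  rcases mul_eq_zero.1 key with h | h
  · exfalso
    by_cases hd : p.natDegree = 0
    · rw [natDegree_eq_zero] at hd
      obtain ⟨a, rfl⟩ := hd
      simp at hpx
      simp [hpx] at hp0
    · have h1 : derivative p ≠ 0 := fun h0 => hd (derivative_eq_zero.1 h0)
      refine hmin (derivative p).natDegree ?_ ⟨_, h1, h, rfl⟩
      rw [← hpn]
      exact natDegree_derivative_lt hd
  · exact h

/-- A nonzero subspace of `K^ι` stable under a derivation contains a nonzero constant vector. -/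
lemma ax_const_vector {R K ι : Type*} [Fintype ι] [CommRing R] [Field K] [Algebra R K]
    (D : Derivation R K K) (S : Submodule K (ι → K)) (hS : ∀ a ∈ S, (fun i => D (a i)) ∈ S)
    (hne : ∃ a ∈ S, a ≠ 0) : ∃ c ∈ S, c ≠ 0 ∧ ∀ i, D (c i) = 0 := by
  classical
  have hex : ∃ n, ∃ a ∈ S, a ≠ 0 ∧ (Finset.univ.filter (fun i => a i ≠ 0)).card = n := by
    obtain ⟨a, h1, h2⟩ := hne
    exact ⟨_, a, h1, h2, rfl⟩
  obtain ⟨a, haS, ha0, han⟩ := Nat.find_spec hex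
  have hmin := fun m => @Nat.find_min _ _ hex m
  obtain ⟨i0, hi0⟩ := Function.ne_iff.1 ha0
  simp at hi0
  set b : ι → K := (a i0)⁻¹ • a with hb
  have hbS : b ∈ S := S.smul_mem _ haS
  have hb0 : b i0 = 1 := by simp [hb, hi0]
  refine ⟨b, hbS, fun h => by simp [h] at hb0, ?_⟩
  by_contra! hcon
  obtain ⟨j, hj⟩ := hcon
  refine hmin (Finset.univ.filter (fun i => D (b i) ≠ 0)).card ?_
    ⟨_, hS b hbS, Function.ne_iff.2 ⟨j, hj⟩, rfl⟩
  rw [← han]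
  apply Finset.card_lt_card
  rw [Finset.ssubset_iff_of_subset]
  · exact ⟨i0, by simpa using hi0, by simp [hb0]⟩
  · intro i
    simp only [Finset.mem_filter, Finset.mem_univ, true_and]
    intro h h0
    apply h
    simp [hb, h0]
open Polynomial IntermediateField

/-- The local ring of `E(z)` at `z = 0`. -/
def axLoc {E K : Type*} [Field E] [Field K] [Algebra E K] (z : K) (_hz : Transcendental E z) :
    Subring K where
  carrier := {x | ∃ p q : E[X], q.coeff 0 ≠ 0 ∧ x * aeval z q = aeval z p}
  mul_mem' := by
    rintro a b ⟨p, q, hq, h⟩ ⟨p', q', hq', h'⟩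
    exact ⟨p * p', q * q', by simp [mul_coeff_zero, hq, hq'], by simp [← h, ← h']; ring⟩
  one_mem' := ⟨1, 1, by simp, by simp⟩
  add_mem' := by
    rintro a b ⟨p, q, hq, h⟩ ⟨p', q', hq', h'⟩
    exact ⟨p * q' + p' * q, q * q', by simp [mul_coeff_zero, hq, hq'], by simp [← h, ← h']; ring⟩
  zero_mem' := ⟨0, 1, by simp, by simp⟩
  neg_mem' := by
    rintro a ⟨p, q, hq, h⟩
    exact ⟨-p, q, hq, by simp [← h]⟩

section
variable {E K : Type*} [Field E] [Field K] [Algebra E K] {z : K} (hz : Transcendental E z)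

lemma ax_aeval_ne (hz : Transcendental E z) {q : E[X]} (hq : q ≠ 0) : aeval z q ≠ 0 := fun h =>
  hz ⟨q, hq, h⟩

lemma ax_z_ne (hz : Transcendental E z) : z ≠ 0 := by
  have := ax_aeval_ne hz (q := X) X_ne_zero
  simpa using this

lemma axLoc_z : z ∈ axLoc z hz := ⟨X, 1, by simp, by simp⟩

lemma axLoc_alg (e : E) : algebraMap E K e ∈ axLoc z hz := ⟨C e, 1, by simp, by simp⟩

lemma axLoc_zinv : z⁻¹ ∉ axLoc z hz := by
  rintro ⟨p, q, hq, h⟩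
  have h1 : aeval z (q - X * p) = 0 := by
    have := ax_z_ne hz
    simp [← h]
    field_simp
    simp
  have h2 : q - X * p = 0 := by
    by_contra h0
    exact ax_aeval_ne hz h0 h1
  apply hq
  rw [sub_eq_zero.1 h2]
  simp

lemma axLoc_der {δ : Derivation E K K} (hδ : δ z = 1) {x : K} (hx : x ∈ axLoc z hz) :
    δ x ∈ axLoc z hz := by
  obtain ⟨p, q, hq, h⟩ := hx
  refine ⟨derivative p * q - p * derivative q, q * q, by simp [mul_coeff_zero, hq], ?_⟩
  have h1 := congrArg δ h
  rw [Derivation.leibniz, Derivation.map_aeval, Derivation.map_aeval, hδ] at h1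
  simp only [smul_eq_mul, mul_one] at h1
  simp only [map_mul, map_sub, ← h, ← h1]
  ring

lemma axLoc_exists {x : K} (hx : x ∈ E⟮z⟯) (hx0 : x ≠ 0) :
    ∃ (k : ℤ) (u : K), u ∈ axLoc z hz ∧ u⁻¹ ∈ axLoc z hz ∧ u ≠ 0 ∧ x = z ^ k * u := by
  obtain ⟨r, s, rfl⟩ := (mem_adjoin_simple_iff E x).1 hx
  have hr : r ≠ 0 := by rintro rfl; simp at hx0
  have hs : s ≠ 0 := by rintro rfl; simp at hx0
  obtain ⟨r', hr1, hr2⟩ := exists_eq_pow_rootMultiplicity_mul_and_not_dvd r hr 0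
  obtain ⟨s', hs1, hs2⟩ := exists_eq_pow_rootMultiplicity_mul_and_not_dvd s hs 0
  simp only [map_zero, sub_zero, X_dvd_iff] at hr1 hr2 hs1 hs2
  have hr0 : r' ≠ 0 := by rintro rfl; simp at hr2
  have hs0 : s' ≠ 0 := by rintro rfl; simp at hs2
  have hz0 := ax_z_ne hz
  have h1 := ax_aeval_ne hz hr0
  have h2 := ax_aeval_ne hz hs0
  refine ⟨(rootMultiplicity 0 r : ℤ) - rootMultiplicity 0 s, aeval z r' / aeval z s',
    ⟨r', s', hs2, by field_simp⟩, ⟨s', r', hr2, by field_simp⟩, div_ne_zero h1 h2, ?_⟩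
  conv_lhs => rw [hr1, hs1]
  rw [zpow_sub₀ hz0]
  simp
  field_simp

/-- the exponent of `z` is well defined -/
lemma axLoc_zpow {k : ℤ} (h : z ^ k ∈ axLoc z hz) (h' : (z ^ k)⁻¹ ∈ axLoc z hz) : k = 0 := by
  have hz0 := ax_z_ne hz
  by_contra hk
  apply axLoc_zinv hz
  rcases lt_or_gt_of_ne hk with hk | hk
  · have : z⁻¹ = z ^ k * z ^ (-k - 1).toNat := by
      rw [← zpow_natCast, Int.toNat_of_nonneg (by omega), ← zpow_add₀ hz0,
        show k + (-k - 1) = -1 by ring, zpow_neg_one]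
    rw [this]
    exact mul_mem h (pow_mem (axLoc_z hz) _)
  · have : z⁻¹ = (z ^ k)⁻¹ * z ^ (k - 1).toNat := by
      rw [← zpow_natCast, Int.toNat_of_nonneg (by omega), ← zpow_neg, ← zpow_add₀ hz0,
        show -k + (k - 1) = -1 by ring, zpow_neg_one]
    rw [this]
    exact mul_mem h' (pow_mem (axLoc_z hz) _)

lemma ax_residue [CharZero K] {ι : Type*} [Fintype ι] {δ : Derivation E K K} (hδ : δ z = 1)
    (c : ι → E) (k : ι → ℤ) (u : ι → K) (hu : ∀ i, u i ∈ axLoc z hz)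
    (hu' : ∀ i, (u i)⁻¹ ∈ axLoc z hz) (hu0 : ∀ i, u i ≠ 0) (w : K) (hw : w ∈ E⟮z⟯)
    (h : ∑ i, algebraMap E K (c i) * (δ (z ^ k i * u i) / (z ^ k i * u i)) = δ w) :
    ∑ i, c i * (k i : E) = 0 := by
  have hz0 := ax_z_ne hz
  set s := ∑ i, c i * (k i : E) with hs
  set g : K := ∑ i, algebraMap E K (c i) * (δ (u i) * (u i)⁻¹) with hg
  have hgO : g ∈ axLoc z hz := sum_mem fun i _ =>
    mul_mem (axLoc_alg hz _) (mul_mem (axLoc_der hz hδ (hu i)) (hu' i))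
  have hδz : ∀ m : ℤ, δ (z ^ m) = m * z ^ m * z⁻¹ := by
    intro m
    rw [Derivation.leibniz_zpow, hδ, zpow_sub₀ hz0]
    simp [div_eq_mul_inv, mul_assoc]
  have h1 : algebraMap E K s * z⁻¹ + g = δ w := by
    rw [← h, hs, hg, map_sum, Finset.sum_mul, ← Finset.sum_add_distrib]
    refine Finset.sum_congr rfl fun i _ => ?_
    have h2 := hu0 i
    have h3 := zpow_ne_zero (k i) hz0
    rw [Derivation.leibniz, hδz]
    simp only [smul_eq_mul, map_mul, map_intCast]
    field_simp
    ring
  have hmain : ∀ g' ∈ axLoc z hz, algebraMap E K s * z⁻¹ = g' → s = 0 := by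
    intro g' hg' he
    by_contra hs0
    apply axLoc_zinv hz
    have : z⁻¹ = algebraMap E K s⁻¹ * g' := by
      rw [← he, ← mul_assoc, ← map_mul, inv_mul_cancel₀ hs0]; simp
    rw [this]
    exact mul_mem (axLoc_alg hz _) hg'
  by_cases hw0 : w = 0
  · refine hmain (-g) (neg_mem hgO) ?_
    rw [hw0, map_zero] at h1
    linear_combination h1
  obtain ⟨m, v, hv, hv', hv0, rfl⟩ := axLoc_exists hz hw hw0
  rcases le_or_gt 0 m with hm | hm
  · have hmem : z ^ m * v ∈ axLoc z hz := by
      refine mul_mem ?_ hv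
      lift m to ℕ using hm
      rw [zpow_natCast]
      exact pow_mem (axLoc_z hz) _
    exact hmain (δ (z ^ m * v) - g) (sub_mem (axLoc_der hz hδ hmem) hgO) (by linear_combination h1)
  · exfalso
    apply axLoc_zinv hz
    rw [Derivation.leibniz, hδz] at h1
    simp only [smul_eq_mul] at h1
    obtain ⟨j, rfl⟩ : ∃ j : ℕ, m = -(j + 1 : ℕ) := ⟨(-m - 1).toNat, by omega⟩
    have h3 : z ^ (-((j + 1 : ℕ) : ℤ)) = (z ^ (j + 1))⁻¹ := by rw [zpow_neg, zpow_natCast]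
    rw [h3] at h1
    have hne : ((-((j + 1 : ℕ) : ℤ) : ℤ) : K) ≠ 0 := by
      rw [Int.cast_ne_zero]; omega
    have hneE : ((-((j + 1 : ℕ) : ℤ) : ℤ) : E) ≠ 0 := by
      intro h0
      apply hne
      rw [← map_intCast (algebraMap E K), h0, map_zero]
    have : z⁻¹ = algebraMap E K ((-((j + 1 : ℕ) : ℤ) : ℤ) : E)⁻¹ * v⁻¹ *
        ((algebraMap E K s + z * g) * z ^ j - δ v) := by
      rw [map_inv₀, map_intCast]
      have hzj : z ^ (j + 1) ≠ 0 := pow_ne_zero _ hz0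
      have h4 : (algebraMap E K s + z * g) * z ^ j =
        δ v + ((-((j + 1 : ℕ) : ℤ) : ℤ) : K) * v * z⁻¹ := by
        have : (algebraMap E K s + z * g) * z ^ j =
          z ^ (j + 1) * (algebraMap E K s * z⁻¹ + g) := by
          field_simp
          ring
        rw [this, h1]
        field_simp
      rw [h4]
      field_simp
      ring
    rw [this]
    refine mul_mem (mul_mem (axLoc_alg hz _) hv') (sub_mem (mul_mem (add_mem (axLoc_alg hz _)
      (mul_mem (axLoc_z hz) hgO)) (pow_mem (axLoc_z hz) _)) (axLoc_der hz hδ hv))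
end

lemma ax_der_comm {E K : Type*} [Field E] [Field K] [CharZero K] [Algebra E K] {z : K}
    [Algebra.IsAlgebraic E⟮z⟯ K] {δ : Derivation E K K} (hδ : δ z = 1)
    (τ : K →ₐ[E⟮z⟯] K) (x : K) : δ (τ x) = τ (δ x) := by
  let τe : K ≃ₐ[E⟮z⟯] K := AlgEquiv.ofBijective τ (Algebra.IsAlgebraic.algHom_bijective τ)
  have hτ : ∀ e : E, τ (algebraMap E K e) = algebraMap E K e := fun e => by
    rw [IsScalarTower.algebraMap_apply E E⟮z⟯ K]; exact τ.commutes _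
  let D : Derivation E K K := Derivation.mk'
    { toFun := fun x => τe.symm (δ (τ x)) - δ x
      map_add' := by intro a b; simp; ring
      map_smul' := by
        intro e a
        have : τe.symm (algebraMap E K e) = algebraMap E K e := by
          rw [AlgEquiv.symm_apply_eq]; exact (hτ e).symm
        simp [Algebra.smul_def, hτ, this]; ring }
    (by
      intro a b
      have : ∀ a, τe.symm (τ a) = a := fun a => τe.symm_apply_apply a
      simp [this]; ring)
  have hD : ∀ x, D x = τe.symm (δ (τ x)) - δ x := fun _ => rfl
  have h0 : D x = 0 := by
    refine ax_der_algebraic (A := E⟮z⟯) D ?_ x (Algebra.IsAlgebraic.isAlgebraic x)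
    intro a
    have ha : δ (algebraMap E⟮z⟯ K a) ∈ E⟮z⟯ := by
      obtain ⟨r, s, h⟩ := (mem_adjoin_simple_iff E (a : K)).1 a.2
      have h' : algebraMap E⟮z⟯ K a = _ := h
      rw [h', Derivation.leibniz_div, Derivation.map_aeval, Derivation.map_aeval, hδ]
      have hz : ∀ p : E[X], aeval z p ∈ E⟮z⟯ := fun p => by
        refine (mem_adjoin_simple_iff E _).2 ⟨p, 1, by simp⟩
      simp only [smul_eq_mul, mul_one]
      exact mul_mem (pow_mem (inv_mem (hz _)) _)
        (sub_mem (mul_mem (hz _) (hz _)) (mul_mem (hz _) (hz _)))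
    rw [hD, AlgHom.commutes, sub_eq_zero, AlgEquiv.symm_apply_eq]
    exact (τ.commutes ⟨_, ha⟩).symm
  rw [hD, sub_eq_zero, AlgEquiv.symm_apply_eq] at h0
  exact h0

lemma ax_logDer_prod {E K ι : Type*} [Field E] [Field K] [Algebra E K] (δ : Derivation E K K)
    (s : Finset ι) (f : ι → K) (h : ∀ i ∈ s, f i ≠ 0) :
    δ (∏ i ∈ s, f i) / ∏ i ∈ s, f i = ∑ i ∈ s, δ (f i) / f i := by
  classical
  induction s using Finset.induction_on with
  | empty => simp
  | insert a s ha ih =>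
    have h1 : f a ≠ 0 := h a (by simp)
    have h2 : ∀ i ∈ s, f i ≠ 0 := fun i hi => h i (by simp [hi])
    have h3 : ∏ i ∈ s, f i ≠ 0 := Finset.prod_ne_zero_iff.2 h2
    rw [Finset.prod_insert ha, Finset.sum_insert ha, ← ih h2, Derivation.leibniz]
    simp only [smul_eq_mul]
    field_simp
    ring

lemma ax_logDer_zpow {E K : Type*} [Field E] [Field K] [Algebra E K] (δ : Derivation E K K)
    (a : K) (ha : a ≠ 0) (m : ℤ) : δ (a ^ m) / a ^ m = m * (δ a / a) := by
  rw [Derivation.leibniz_zpow, zpow_sub₀ ha]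
  have := zpow_ne_zero m ha
  simp
  field_simp

lemma ax_zpow_sum {K ι : Type*} [Field K] [Fintype ι] {z : K} (hz : z ≠ 0) (f : ι → ℤ) :
    z ^ (∑ i, f i) = ∏ i, z ^ f i := by
  classical
  suffices ∀ s : Finset ι, z ^ (∑ i ∈ s, f i) = ∏ i ∈ s, z ^ f i from this _
  intro s
  induction s using Finset.induction_on with
  | empty => simp
  | insert a s ha ih => rw [Finset.sum_insert ha, Finset.prod_insert ha, zpow_add₀ hz, ih]

lemma ax_norm_step {E K ι : Type*} [Field E] [Field K] [CharZero K] [IsAlgClosed K] [Algebra E K]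
    [Fintype ι] {z : K} (hz : Transcendental E z) [Algebra.IsAlgebraic E⟮z⟯ K]
    {δ : Derivation E K K} (hδ : δ z = 1) (c : ι → E) (y : ι → K) (hy : ∀ i, y i ≠ 0) (v : K)
    (h : ∑ i, algebraMap E K (c i) * (δ (y i) / y i) = δ v) :
    ∃ k : ι → ℤ, ∑ i, c i * (k i : E) = 0 ∧
      ∀ m : ι → ℤ, ∏ i, y i ^ m i = z → ∑ i, m i * k i ≠ 0 := by
  have : CharZero E := (RingHom.charZero_iff (algebraMap E K).injective).2 inferInstance
  let L : IntermediateField E⟮z⟯ K := IntermediateField.adjoin E⟮z⟯ (Set.range y ∪ {v})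
  have hLfin : FiniteDimensional E⟮z⟯ L := by
    have : Finite (Set.range y ∪ {v} : Set K) :=
      (Set.finite_range y).union (Set.finite_singleton v)
    exact IntermediateField.finiteDimensional_adjoin
      (fun x _ => Algebra.IsIntegral.isIntegral x)
  let Y : ι → L := fun i => ⟨y i, IntermediateField.subset_adjoin _ _ (Or.inl ⟨i, rfl⟩)⟩
  let V : L := ⟨v, IntermediateField.subset_adjoin _ _ (Or.inr rfl)⟩
  let Nm : L →*₀ K :=
    { toFun := fun x => algebraMap E⟮z⟯ K (Algebra.norm E⟮z⟯ x)
      map_zero' := by simp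
      map_one' := by simp
      map_mul' := by intro a b; simp }
  have hNm : ∀ x, Nm x = algebraMap E⟮z⟯ K (Algebra.norm E⟮z⟯ x) := fun _ => rfl
  have hN : ∀ x : L, Nm x = ∏ σ : L →ₐ[E⟮z⟯] K, σ x := fun x =>
    Algebra.norm_eq_prod_embeddings E⟮z⟯ K x
  have hY0 : ∀ i, Y i ≠ 0 := fun i h0 => hy i (congrArg Subtype.val h0)
  have hNY0 : ∀ i, Nm (Y i) ≠ 0 := fun i => by
    rw [hN, Finset.prod_ne_zero_iff]
    intro σ _
    simpa using hY0 i
  have hNF : ∀ x, Nm x ∈ E⟮z⟯ := fun x => (Algebra.norm E⟮z⟯ x).2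
  choose k u hu hu' hu0 hku using fun i => axLoc_exists hz (hNF (Y i)) (hNY0 i)
  refine ⟨k, ?_, ?_⟩
  · refine ax_residue hz hδ c k u hu hu' hu0 (algebraMap E⟮z⟯ K (Algebra.trace E⟮z⟯ L V))
      (Algebra.trace E⟮z⟯ L V).2 ?_
    rw [trace_eq_sum_embeddings K]
    simp_rw [← hku, hN]
    have h1 : ∀ i, δ (∏ σ : L →ₐ[E⟮z⟯] K, σ (Y i)) / ∏ σ : L →ₐ[E⟮z⟯] K, σ (Y i) =
        ∑ σ : L →ₐ[E⟮z⟯] K, δ (σ (Y i)) / σ (Y i) := fun i =>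
      ax_logDer_prod δ _ _ (fun σ _ => by simpa using hY0 i)
    simp_rw [h1, Finset.mul_sum, map_sum]
    rw [Finset.sum_comm]
    refine Finset.sum_congr rfl fun σ _ => ?_
    obtain ⟨τ, hτ⟩ : ∃ τ : K →ₐ[E⟮z⟯] K, ∀ x : L, τ x = σ x := by
      obtain ⟨τ, hτ⟩ := IntermediateField.exists_algHom_of_splits' (K := K) (L := L) (E := K) σ
        (fun s => ⟨(Algebra.IsIntegral.isIntegral (R := E⟮z⟯) s).tower_top, IsAlgClosed.splits _⟩)
      exact ⟨τ, fun x => DFunLike.congr_fun hτ x⟩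
    have hτE : ∀ e : E, τ (algebraMap E K e) = algebraMap E K e := fun e => by
      rw [IsScalarTower.algebraMap_apply E E⟮z⟯ K]; exact τ.commutes _
    have h2 := congrArg τ h
    simp only [map_sum, map_mul, map_div₀, ← ax_der_comm hδ τ, hτE] at h2
    rw [← hτ V]
    refine Eq.trans (Finset.sum_congr rfl fun i _ => ?_) h2
    rw [← hτ (Y i)]
  · intro m hm hsum
    have hzL : (∏ i, Y i ^ m i : L) = algebraMap E⟮z⟯ L (AdjoinSimple.gen E z) := by
      apply (algebraMap L K).injective
      rw [map_prod]
      simp_rw [map_zpow₀]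
      exact hm
    have h1 : Nm (∏ i, Y i ^ m i) = z ^ (Module.finrank E⟮z⟯ L) := by
      rw [hNm, hzL, Algebra.norm_algebraMap]
      simp
    have h2 : Nm (∏ i, Y i ^ m i) = ∏ i, u i ^ m i := by
      have : Nm (∏ i, Y i ^ m i) = ∏ i, Nm (Y i) ^ m i := by
        rw [map_prod]; simp_rw [map_zpow₀]
      rw [this]
      simp_rw [hku, mul_zpow, ← zpow_mul]
      rw [Finset.prod_mul_distrib]
      have : ∏ i, z ^ (k i * m i) = z ^ (∑ i, m i * k i) := by
        simp_rw [mul_comm (k _)]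
        exact (ax_zpow_sum (ax_z_ne hz) _).symm
      rw [this, hsum]; simp
    have hmem : ∀ (a : K) (ha : a ∈ axLoc z hz) (ha' : a⁻¹ ∈ axLoc z hz) (j : ℤ),
        a ^ j ∈ axLoc z hz := by
      intro a ha ha' j
      cases j with
      | ofNat j => simpa using pow_mem ha j
      | negSucc j => rw [zpow_negSucc, ← inv_pow]; exact pow_mem ha' _
    have h3 := axLoc_zpow hz (k := Module.finrank E⟮z⟯ L)
      (by rw [zpow_natCast, ← h1, h2]; exact prod_mem fun i _ => hmem _ (hu i) (hu' i) _)
      (by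
        rw [zpow_natCast, ← h1, h2, ← Finset.prod_inv_distrib]
        refine prod_mem fun i _ => ?_
        rw [← zpow_neg]
        exact hmem _ (hu i) (hu' i) _)
    have h4 : 0 < Module.finrank E⟮z⟯ L := Module.finrank_pos
    omega

open scoped IntermediateField.algebraAdjoinAdjoin

lemma ax_exists_der {E K : Type*} [Field E] [Field K] [CharZero K] [Algebra E K]
    {z : K} (hz : Transcendental E z) [Algebra.IsAlgebraic E⟮z⟯ K] :
    ∃ δ : Derivation E K K, δ z = 1 := by
  have : CharZero E := (RingHom.charZero_iff (algebraMap E K).injective).2 inferInstance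
  let A := Algebra.adjoin E ({z} : Set K)
  have h1 : Algebra.FormallyEtale A E⟮z⟯ := .of_isLocalization (nonZeroDivisors _)
  have h2 : Algebra.FormallyEtale E⟮z⟯ K := .of_isSeparable _ K
  have h3 : Algebra.FormallyEtale A K := .comp _ E⟮z⟯ _
  have hA : ∀ a : A, ∃ p : E[X], aeval z p = (a : K) := by
    intro a
    obtain ⟨a, ha⟩ := a
    have ha' := ha
    simp only [A] at ha'
    rw [Algebra.adjoin_singleton_eq_range_aeval E z] at ha'
    exact ha'
  choose P hP using hA
  have hinj : ∀ p q : E[X], aeval z p = aeval z q → p = q := by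
    intro p q h
    by_contra h0
    exact ax_aeval_ne hz (sub_ne_zero.2 h0) (by simp [h])
  let d : Derivation E A K := Derivation.mk'
    { toFun := fun a => aeval z (derivative (P a))
      map_add' := by
        intro a b
        rw [hinj (P (a + b)) (P a + P b) (by simp [hP])]; simp
      map_smul' := by
        intro e a
        rw [hinj (P (e • a)) (e • P a) (by simp [hP])]; simp }
    (by
      intro a b
      change aeval z (derivative (P (a * b))) = a • aeval z (derivative (P b)) +
        b • aeval z (derivative (P a))
      rw [hinj (P (a * b)) (P a * P b) (by simp [hP])]
      simp [hP, Algebra.smul_def]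
      change _ = (a : K) * _ + (b : K) * _
      ring)
  obtain ⟨D, hD⟩ := ax_exists_extension d
  refine ⟨D, ?_⟩
  have hzA : z ∈ A := Algebra.subset_adjoin rfl
  have := hD ⟨z, hzA⟩
  have h4 : P ⟨z, hzA⟩ = X := hinj _ _ (by simp [hP])
  have h5 : d ⟨z, hzA⟩ = 1 := by
    change aeval z (derivative (P ⟨z, hzA⟩)) = 1
    rw [h4]; simp
  rw [h5] at this
  exact this

lemma ax_residue_step {C K ι : Type*} [Field C] [Field K] [CharZero K] [IsAlgClosed K] [Algebra C K]
    [Fintype ι] {z : K} (hz : Transcendental C z) (c : ι → C) (y : ι → K) (hy : ∀ i, y i ≠ 0)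
    (v : K)
    (h : ∀ δ : Derivation C K K, ∑ i, algebraMap C K (c i) * (δ (y i) / y i) = δ v) :
    ∃ k : ι → ℤ, ∑ i, c i * (k i : C) = 0 ∧
      ∀ m : ι → ℤ, ∏ i, y i ^ m i = z → ∑ i, m i * k i ≠ 0 := by
  have hz1 : AlgebraicIndepOn C (id : K → K) {z} := by
    have := (algebraicIndependent_unique_type_iff (ι := ({z} : Set K)) (R := C)
      (x := fun i => (i : K))).2 hz
    exact this
  obtain ⟨B, hzB, hB⟩ := exists_isTranscendenceBasis_superset hz1
  have hzB' : z ∈ B := hzB rfl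
  have hins : insert z (B \ {z}) = B := by simp [Set.insert_eq_of_mem hzB']
  let E := IntermediateField.adjoin C (B \ {z})
  have hzE' : Transcendental (Algebra.adjoin C (B \ {z})) z := by
    have := hB.1
    have h1 : AlgebraicIndepOn C (id : K → K) (insert z (B \ {z})) := by rw [hins]; exact this
    have h2 := ((AlgebraicIndepOn.insert_iff (by simp)).1 h1).2
    rw [Set.image_id] at h2; exact h2
  have hzE : Transcendental E z := fun h0 => hzE'
    ((IsFractionRing.isAlgebraic_iff (Algebra.adjoin C (B \ {z})) E K).2 h0)
  have halg : Algebra.IsAlgebraic E⟮z⟯ K := by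
    have H := hB.isAlgebraic_field
    have h1 : IntermediateField.adjoin C (Set.range ((↑) : B → K)) =
        IntermediateField.restrictScalars C E⟮z⟯ := by
      rw [adjoin_adjoin_left, Subtype.range_coe, Set.union_comm, ← Set.insert_eq, hins]
    rw [h1] at H
    exact H
  obtain ⟨δ, hδ⟩ := ax_exists_der hzE
  obtain ⟨k, hk1, hk2⟩ := ax_norm_step hzE hδ (fun i => algebraMap C E (c i)) y hy v (by
    have := h (δ.restrictScalars C)
    simpa [← IsScalarTower.algebraMap_apply] using this)
  refine ⟨k, ?_, hk2⟩
  apply (algebraMap C E).injective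
  simpa using hk1

lemma ax_int_vector {C : Type*} [Field C] [CharZero C] {n : ℕ} (c : Fin n → C) (hc : c ≠ 0) :
    ∃ m : Fin n → ℤ, m ≠ 0 ∧ ∀ k : Fin n → ℤ, ∑ i, c i * (k i : C) = 0 → ∑ i, m i * k i = 0 := by
  classical
  let φ : (Fin n → ℚ) →ₗ[ℚ] C :=
    { toFun := fun k => ∑ i, c i * (k i : C)
      map_add' := by intro a b; simp [mul_add, Finset.sum_add_distrib]
      map_smul' := by
        intro a b
        simp [Finset.mul_sum, Algebra.smul_def]
        exact Finset.sum_congr rfl fun i _ => by ring }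
  have hφ : ∀ k, φ k = ∑ i, c i * (k i : C) := fun _ => rfl
  have hlt : LinearMap.ker φ < ⊤ := by
    rw [lt_top_iff_ne_top]
    intro h
    apply hc
    ext i
    have h1 : φ (Pi.single i 1) = 0 := by
      rw [← LinearMap.mem_ker, h]; trivial
    rw [hφ, Finset.sum_eq_single i] at h1
    · simpa using h1
    · intro j _ hj; simp [hj]
    · simp
  obtain ⟨ψ, hψ0, hψ⟩ := Submodule.exists_le_ker_of_lt_top _ hlt
  have hψe : ∀ k, ψ k = ∑ i, k i * ψ (Pi.single i 1) := by
    intro k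
    rw [LinearMap.pi_apply_eq_sum_univ ψ k]
    refine Finset.sum_congr rfl fun i _ => ?_
    rw [smul_eq_mul]
    congr 2
    ext j
    simp [Pi.single_apply, eq_comm]
  obtain ⟨b, hb⟩ := IsLocalization.exist_integer_multiples (nonZeroDivisors ℤ) Finset.univ
    (fun i : Fin n => ψ (Pi.single i 1))
  choose m hm using fun i => hb i (Finset.mem_univ i)
  have hb0 : ((b : ℤ) : ℚ) ≠ 0 := by
    have := nonZeroDivisors.coe_ne_zero b
    exact_mod_cast this
  have hm' : ∀ i, (m i : ℚ) = (b : ℤ) * ψ (Pi.single i 1) := by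
    intro i
    have := hm i
    simpa [Algebra.smul_def] using this
  refine ⟨m, ?_, ?_⟩
  · rintro rfl
    apply hψ0
    ext i
    have := hm' i
    simpa [hb0] using this
  · intro k hk
    have h1 : ψ (fun i => (k i : ℚ)) = 0 := by
      have : (fun i => (k i : ℚ)) ∈ LinearMap.ker φ := by
        rw [LinearMap.mem_ker, hφ]
        simpa using hk
      exact hψ this
    rw [hψe] at h1
    have : ((∑ i, m i * k i : ℤ) : ℚ) = 0 := by
      push_cast
      simp_rw [hm', mul_assoc]
      rw [← Finset.mul_sum]
      simp_rw [mul_comm (ψ _)]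
      rw [h1, mul_zero]
    exact_mod_cast this

theorem ax_abstract {C K : Type*} [Field C] [Field K] [CharZero K] [IsAlgClosed K] [Algebra C K]
    (D : Derivation C K K) (hDC : ∀ a, D a = 0 → ∃ c, algebraMap C K c = a) {n : ℕ}
    (x y : Fin n → K) (hy : ∀ i, y i ≠ 0) (hxy : ∀ i, D (y i) = y i * D (x i))
    (hlin : ∀ m : Fin n → ℤ, m ≠ 0 → ∑ i, (m i : K) * D (x i) ≠ 0) :
    ∃ g : Fin n → (Fin n) ⊕ (Fin n), Function.Injective g ∧
      AlgebraicIndependent C (fun i => Sum.elim x y (g i)) := by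
  classical
  have : CharZero C := (RingHom.charZero_iff (algebraMap C K).injective).2 inferInstance
  set s : Fin n ⊕ Fin n → K := Sum.elim x y with hs
  -- a maximal algebraically independent subfamily
  obtain ⟨I, hI⟩ : ∃ I : Set (Fin n ⊕ Fin n), Maximal (fun I => AlgebraicIndepOn C s I) I := by
    refine Set.Finite.exists_maximal (Set.toFinite _) ⟨∅, ?_⟩
    exact algebraicIndependent_empty_type_iff.2 (algebraMap C K).injective
  have hIalg : ∀ j, IsAlgebraic (Algebra.adjoin C (s '' I)) (s j) := by
    intro j
    by_contra hj
    have h1 : AlgebraicIndepOn C s (insert j I) := hI.1.insert hj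
    have h2 : j ∈ I := hI.2 h1 (Set.subset_insert _ _) (Set.mem_insert _ _)
    exact hj (isAlgebraic_algebraMap
      (⟨_, Algebra.subset_adjoin ⟨j, h2, rfl⟩⟩ : Algebra.adjoin C (s '' I)))
  by_cases hcard : n ≤ Fintype.card I
  · have e : Fin n ↪ I := (Fin.castLEEmb hcard).trans (Fintype.equivFin I).symm.toEmbedding
    refine ⟨fun i => e i, fun a b h => e.injective (Subtype.ext h), ?_⟩
    exact AlgebraicIndependent.comp hI.1 e e.injective
  exfalso
  push Not at hcard
  -- the forms `dy/y - dx`, as functionals on derivations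
  let ℓ : Fin n → (Derivation C K K →ₗ[K] K) := fun i =>
    { toFun := fun δ => δ (y i) / y i - δ (x i)
      map_add' := by intro a b; simp; ring
      map_smul' := by intro a b; simp; ring }
  have hℓ : ∀ i δ, ℓ i δ = δ (y i) / y i - δ (x i) := fun _ _ => rfl
  let ev : I → (Derivation C K K →ₗ[K] K) := fun j =>
    { toFun := fun δ => δ (s j)
      map_add' := by intro a b; simp
      map_smul' := by intro a b; simp }
  have hev : ∀ j δ, ev j δ = δ (s j) := fun _ _ => rfl
  have hspan : ∀ i, ℓ i ∈ Submodule.span K (Set.range ev) := by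
    intro i
    apply mem_span_of_iInf_ker_le_ker
    intro δ hδ
    have hδ' : ∀ j : I, δ (s j) = 0 := by
      intro j
      have := (Submodule.mem_iInf _).1 hδ j
      exact this
    have hkill : ∀ j, δ (s j) = 0 := by
      intro j
      refine ax_der_algebraic (A := Algebra.adjoin C (s '' I)) δ ?_ _ (hIalg j)
      rintro ⟨a, ha⟩
      change δ a = 0
      induction ha using Algebra.adjoin_induction with
      | mem a ha => obtain ⟨j, hj, rfl⟩ := ha; exact hδ' ⟨j, hj⟩
      | algebraMap r => simp
      | add a b _ _ ha hb => simp [ha, hb]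
      | mul a b _ _ ha hb => simp [ha, hb]
    rw [LinearMap.mem_ker, hℓ]
    have h1 := hkill (Sum.inl i)
    have h2 := hkill (Sum.inr i)
    simp only [hs, Sum.elim_inl, Sum.elim_inr] at h1 h2
    simp [h1, h2]
  have hdep : ¬ LinearIndependent K ℓ := by
    intro hli
    have h1 := linearIndependent_le_span' ℓ hli (Set.range ev) (by
      rintro _ ⟨i, rfl⟩; exact hspan i)
    have h2 : Fintype.card (Set.range ev) ≤ Fintype.card I := Fintype.card_range_le ev
    have h3 : n ≤ Fintype.card (Set.range ev) := by simpa using h1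
    omega
  let S : Submodule K (Fin n → K) :=
    { carrier := {a | ∀ δ, ∑ i, a i * ℓ i δ = 0}
      add_mem' := by
        intro a b ha hb δ
        simp [add_mul, Finset.sum_add_distrib, ha δ, hb δ]
      zero_mem' := by intro δ; simp
      smul_mem' := by
        intro r a ha δ
        simp [mul_assoc, ← Finset.mul_sum, ha δ] }
  have hSmem : ∀ a, a ∈ S ↔ ∀ δ, ∑ i, a i * ℓ i δ = 0 := fun _ => Iff.rfl
  have hSD : ∀ a ∈ S, (fun i => D (a i)) ∈ S := by
    intro a ha δ
    have h1 := congrArg D (ha δ)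
    have h2 := ha ⁅D, δ⁆
    have h3 : ∀ i, D (ℓ i δ) = ℓ i ⁅D, δ⁆ := by
      intro i
      have hyi := hy i
      have e1 : δ (D (y i)) = y i * δ (D (x i)) + D (x i) * δ (y i) := by
        rw [hxy]; simp
      rw [hℓ, hℓ, map_sub, Derivation.leibniz_div, Derivation.commutator_apply,
        Derivation.commutator_apply, e1, hxy]
      simp only [smul_eq_mul]
      field_simp
      ring
    rw [map_sum, map_zero] at h1
    simp only [Derivation.leibniz, smul_eq_mul, h3, Finset.sum_add_distrib, h2, zero_add] at h1
    rw [← h1]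
    exact Finset.sum_congr rfl fun i _ => mul_comm _ _
  obtain ⟨c, hcS, hc0, hcD⟩ := ax_const_vector D S hSD (by
    rw [Fintype.not_linearIndependent_iff] at hdep
    obtain ⟨a, ha, i, hi⟩ := hdep
    refine ⟨a, fun δ => ?_, fun h0 => hi (by simp [h0])⟩
    have := LinearMap.congr_fun ha δ
    simpa using this)
  choose c' hc' using fun i => hDC _ (hcD i)
  have hc'0 : c' ≠ 0 := by
    rintro rfl
    apply hc0
    ext i
    simp [← hc' i]
  obtain ⟨m, hm0, hm⟩ := ax_int_vector c' hc'0
  set z : K := ∏ i, y i ^ m i with hz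
  have hz0 : z ≠ 0 := Finset.prod_ne_zero_iff.2 fun i _ => zpow_ne_zero _ (hy i)
  have hztr : Transcendental C z := by
    intro halg
    have hDz : D z = 0 := ax_der_algebraic (A := C) D (by simp) z halg
    have h1 := ax_logDer_prod D Finset.univ (fun i => y i ^ m i) fun i _ => zpow_ne_zero _ (hy i)
    rw [← hz, hDz, zero_div] at h1
    apply hlin m hm0
    rw [h1]
    refine Finset.sum_congr rfl fun i _ => ?_
    have hyi := hy i
    rw [ax_logDer_zpow D _ (hy i), hxy]
    field_simp
  obtain ⟨k, hk1, hk2⟩ := ax_residue_step hztr c' y hy (∑ i, c i * x i) (by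
    intro δ
    have h1 := hcS δ
    have h2 : ∀ i, δ (c i) = 0 := fun i => by rw [← hc' i]; simp
    simp only [hℓ, mul_sub, Finset.sum_sub_distrib, sub_eq_zero] at h1
    simp only [hc', h1, map_sum, Derivation.leibniz, h2]
    simp)
  exact hk2 m rfl (hm k hk1)

/-- Taylor series of a function at a point. -/
noncomputable def axT (p : ℂ) (f : ℂ → ℂ) : PowerSeries ℂ :=
  PowerSeries.mk fun k => iteratedDeriv k f p / (k.factorial : ℂ)

lemma axT_congr {p : ℂ} {f g : ℂ → ℂ} (h : f =ᶠ[nhds p] g) : axT p f = axT p g := by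
  ext k
  simp [axT, h.iteratedDeriv_eq]

lemma axT_mul {p : ℂ} {f g : ℂ → ℂ} (hf : AnalyticAt ℂ f p) (hg : AnalyticAt ℂ g p) :
    axT p (f * g) = axT p f * axT p g := by
  ext k
  rw [PowerSeries.coeff_mul, axT, PowerSeries.coeff_mk,
    iteratedDeriv_mul hf.contDiffAt hg.contDiffAt,
    Finset.Nat.sum_antidiagonal_eq_sum_range_succ_mk, Finset.sum_div]
  refine Finset.sum_congr rfl fun i hi => ?_
  simp only [axT, PowerSeries.coeff_mk]
  have hik : i ≤ k := by simpa [Nat.lt_succ_iff] using hi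
  rw [Nat.cast_choose ℂ hik]
  have h1 : (k.factorial : ℂ) ≠ 0 := by exact_mod_cast k.factorial_ne_zero
  have h2 : (i.factorial : ℂ) ≠ 0 := by exact_mod_cast i.factorial_ne_zero
  have h3 : ((k - i).factorial : ℂ) ≠ 0 := by exact_mod_cast (k - i).factorial_ne_zero
  field_simp

lemma axT_add {p : ℂ} {f g : ℂ → ℂ} (hf : AnalyticAt ℂ f p) (hg : AnalyticAt ℂ g p) :
    axT p (f + g) = axT p f + axT p g := by
  ext k
  simp [axT, iteratedDeriv_add hf.contDiffAt hg.contDiffAt, add_div]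

lemma axT_const (p c : ℂ) : axT p (fun _ => c) = algebraMap ℂ (PowerSeries ℂ) c := by
  ext k
  rw [PowerSeries.algebraMap_apply, PowerSeries.coeff_C]
  simp only [axT, PowerSeries.coeff_mk, iteratedDeriv_const]
  split_ifs with h <;> simp [h]

lemma axT_deriv (p : ℂ) (f : ℂ → ℂ) :
    axT p (deriv f) = PowerSeries.derivative ℂ (axT p f) := by
  ext k
  rw [PowerSeries.coeff_derivative]
  simp only [axT, PowerSeries.coeff_mk, ← iteratedDeriv_succ', Nat.factorial_succ]
  have h1 : (k.factorial : ℂ) ≠ 0 := by exact_mod_cast k.factorial_ne_zero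
  have h2 : (k + 1 : ℂ) ≠ 0 := by exact_mod_cast k.succ_ne_zero
  push_cast
  field_simp

lemma axT_eq_zero {p : ℂ} {f : ℂ → ℂ} (hf : AnalyticAt ℂ f p) (h : axT p f = 0) :
    f =ᶠ[nhds p] 0 := by
  have h1 := hf.hasFPowerSeriesAt
  have h2 : (fun n : ℕ => iteratedDeriv n f p / (n.factorial : ℂ)) = 0 := by
    ext k
    have := congrArg (PowerSeries.coeff k) h
    simpa [axT] using this
  rw [h2] at h1
  have h3 : FormalMultilinearSeries.ofScalars ℂ (0 : ℕ → ℂ) = 0 := by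
    ext; simp [FormalMultilinearSeries.ofScalars]
  rw [h3] at h1
  exact h1.eventually_eq_zero

/-- Functions analytic at a point. -/
def axAn (p : ℂ) : Subalgebra ℂ (ℂ → ℂ) where
  carrier := {f | AnalyticAt ℂ f p}
  mul_mem' := fun hf hg => AnalyticAt.mul hf hg
  add_mem' := fun hf hg => AnalyticAt.add hf hg
  algebraMap_mem' := fun c => analyticAt_const (v := c)

/-- Taylor expansion as an algebra map. -/
noncomputable def axTHom (p : ℂ) : axAn p →ₐ[ℂ] PowerSeries ℂ where
  toFun f := axT p f
  map_one' := by
    have := axT_const p 1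
    rw [map_one] at this
    exact this
  map_mul' f g := axT_mul f.2 g.2
  map_zero' := by
    have := axT_const p 0
    rw [map_zero] at this
    exact this
  map_add' f g := axT_add f.2 g.2
  commutes' c := axT_const p c

abbrev AxK := AlgebraicClosure (FractionRing (PowerSeries ℂ))

lemma ax_exists_D : ∃ D : Derivation ℂ AxK AxK, ∀ φ : PowerSeries ℂ,
    D (algebraMap _ AxK φ) = algebraMap _ AxK (PowerSeries.derivative ℂ φ) := by
  have h1 : Algebra.FormallyEtale (PowerSeries ℂ) (FractionRing (PowerSeries ℂ)) :=
    .of_isLocalization (nonZeroDivisors _)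
  have : CharZero (FractionRing (PowerSeries ℂ)) :=
    charZero_of_injective_algebraMap (algebraMap ℂ (FractionRing (PowerSeries ℂ))).injective
  have h2 : Algebra.FormallyEtale (FractionRing (PowerSeries ℂ)) AxK := .of_isSeparable _ _
  have h3 : Algebra.FormallyEtale (PowerSeries ℂ) AxK :=
    .comp _ (FractionRing (PowerSeries ℂ)) _
  exact ax_exists_extension
    ((Algebra.linearMap (PowerSeries ℂ) AxK).compDer (PowerSeries.derivative ℂ))

/-- Field of constants. -/
def axConst {K : Type*} [Field K] [Algebra ℂ K] (D : Derivation ℂ K K) : IntermediateField ℂ K where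
  carrier := {a | D a = 0}
  mul_mem' := by intro a b ha hb; simp_all
  add_mem' := by intro a b ha hb; simp_all
  algebraMap_mem' := by intro a; simp
  inv_mem' := by intro a ha; simp_all [Derivation.leibniz_inv]

theorem ax_schanuel_exp (n : ℕ) (U : Set ℂ) (hU : IsOpen U) (hUc : IsConnected U)
    (f : Fin n → ℂ → ℂ) (hf : ∀ i, DifferentiableOn ℂ (f i) U)
    (hnc : ∀ q : Fin n → ℚ, q ≠ 0 → ¬ ∃ c : ℂ, ∀ z ∈ U, ∑ i, (q i : ℂ) * f i z = c) :
    ∃ g : Fin n → (Fin n) ⊕ (Fin n), Function.Injective g ∧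
      AlgebraicIndependent ℂ (fun i : Fin n =>
        Sum.elim (fun j => fun z : U => f j z) (fun j => fun z : U => Complex.exp (f j z))
          (g i)) := by
  obtain ⟨p, hp⟩ := hUc.nonempty
  obtain ⟨D, hD⟩ := ax_exists_D
  have hchar : CharZero AxK := charZero_of_injective_algebraMap (algebraMap ℂ AxK).injective
  have hinj : Function.Injective (algebraMap (PowerSeries ℂ) AxK) := by
    rw [IsScalarTower.algebraMap_eq (PowerSeries ℂ) (FractionRing (PowerSeries ℂ)) AxK]
    exact (algebraMap (FractionRing (PowerSeries ℂ)) AxK).injective.comp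
      (IsFractionRing.injective (PowerSeries ℂ) (FractionRing (PowerSeries ℂ)))
  have hfa : ∀ i, ∀ z ∈ U, AnalyticAt ℂ (f i) z := fun i z hz =>
    (hf i).analyticAt (hU.mem_nhds hz)
  let fe : Fin n → ℂ → ℂ := fun i z => Complex.exp (f i z)
  have hfea : ∀ i, AnalyticAt ℂ (fe i) p := fun i => (hfa i p hp).cexp
  let T : axAn p →ₐ[ℂ] AxK := (IsScalarTower.toAlgHom ℂ (PowerSeries ℂ) AxK).comp (axTHom p)
  have hT : ∀ a, T a = algebraMap _ AxK (axT p a) := fun _ => rfl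
  let G : Fin n ⊕ Fin n → axAn p := Sum.elim (fun i => ⟨f i, hfa i p hp⟩) (fun i => ⟨fe i, hfea i⟩)
  let x : Fin n → AxK := fun i => algebraMap _ AxK (axT p (f i))
  let y : Fin n → AxK := fun i => algebraMap _ AxK (axT p (fe i))
  let D' : Derivation (axConst D) AxK AxK := Derivation.mk'
    { toFun := D
      map_add' := by simp
      map_smul' := by
        intro a b
        have : D (a : AxK) = 0 := a.2
        change D ((a : AxK) * b) = (a : AxK) * D b
        simp [this] } (by intro a b; simp)
  have hD' : ∀ a, D' a = D a := fun _ => rfl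
  have hDx : ∀ i, D (x i) = algebraMap _ AxK (axT p (deriv (f i))) := fun i => by
    rw [hD, axT_deriv]
  have hy : ∀ i, y i ≠ 0 := by
    intro i h0
    have h1 : axT p (fe i) = 0 := hinj (by rw [map_zero]; exact h0)
    have h2 := (axT_eq_zero (hfea i) h1).self_of_nhds
    exact Complex.exp_ne_zero _ h2
  have hxy : ∀ i, D' (y i) = y i * D' (x i) := by
    intro i
    rw [hD', hD', hDx, hD, ← map_mul, ← axT_deriv, ← axT_mul (hfea i) (hfa i p hp).deriv]
    congr 1
    apply axT_congr
    filter_upwards [hU.mem_nhds hp] with z hz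
    have := (hfa i z hz).differentiableAt.hasDerivAt.cexp
    exact this.deriv
  have hlin : ∀ m : Fin n → ℤ, m ≠ 0 → ∑ i, (m i : AxK) * D' (x i) ≠ 0 := by
    intro m hm h0
    simp only [hD', hDx] at h0
    let h : axAn p := ∑ i, algebraMap ℂ (axAn p) (m i) * ⟨deriv (f i), (hfa i p hp).deriv⟩
    have hval : (h : ℂ → ℂ) = fun z => ∑ i, (m i : ℂ) * deriv (f i) z := by
      ext z
      let e1 : axAn p →ₐ[ℂ] ℂ := (Pi.evalAlgHom ℂ (fun _ : ℂ => ℂ) z).comp (axAn p).val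
      change e1 h = _
      simp only [h, map_sum, map_mul, AlgHom.commutes]
      rfl
    have hTh : T h = 0 := by
      rw [← h0]
      simp only [h, map_sum, map_mul, map_intCast]
      rfl
    have hTh' : axT p h = 0 := hinj (by rw [map_zero]; exact hTh)
    have hev := axT_eq_zero h.2 hTh'
    rw [hval] at hev
    have han : AnalyticOnNhd ℂ (fun z => ∑ i, (m i : ℂ) * deriv (f i) z) U := by
      intro z hz
      exact Finset.analyticAt_fun_sum _ fun i _ => analyticAt_const.mul (hfa i z hz).deriv
    have hzero := han.eqOn_zero_of_preconnected_of_eventuallyEq_zero hUc.isPreconnected hp hev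
    have hder : ∀ z ∈ U, HasDerivAt (fun z => ∑ i, (m i : ℂ) * f i z) 0 z := by
      intro z hz
      have h1 : HasDerivAt (fun z => ∑ i, (m i : ℂ) * f i z) (∑ i, (m i : ℂ) * deriv (f i) z) z :=
        HasDerivAt.fun_sum fun i _ =>
          ((hfa i z hz).differentiableAt.hasDerivAt).const_mul _
      rwa [show (∑ i, (m i : ℂ) * deriv (f i) z) = 0 from hzero hz] at h1
    obtain ⟨c, hc⟩ := hU.exists_is_const_of_deriv_eq_zero hUc.isPreconnected
      (fun z hz => (hder z hz).differentiableAt.differentiableWithinAt)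
      (fun z hz => (hder z hz).deriv)
    refine hnc (fun i => (m i : ℚ)) ?_ ⟨c, fun z hz => ?_⟩
    · intro h
      apply hm
      ext i
      simpa using congrFun h i
    · simpa using hc z hz
  obtain ⟨g, hg, hind⟩ := ax_abstract D' (fun a ha => ⟨⟨a, ha⟩, rfl⟩) x y hy hxy hlin
  refine ⟨g, hg, ?_⟩
  have hind' : AlgebraicIndependent ℂ (fun i => Sum.elim x y (g i)) :=
    hind.restrictScalars (algebraMap ℂ (axConst D)).injective
  rw [algebraicIndependent_iff] at hind' ⊢
  intro P hP
  apply hind'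
  have h1 : (fun i => Sum.elim x y (g i)) = fun i => T (G (g i)) := by
    ext i
    rcases h : g i with j | j <;> rfl
  rw [h1]
  have h2 : MvPolynomial.aeval (fun i => T (G (g i))) P =
      T (MvPolynomial.aeval (fun i => G (g i)) P) := by
    rw [← MvPolynomial.comp_aeval_apply]
  rw [h2, hT]
  have h3 : ((MvPolynomial.aeval (fun i => G (g i)) P : axAn p) : ℂ → ℂ) =ᶠ[nhds p]
      fun _ => 0 := by
    filter_upwards [hU.mem_nhds hp] with z hz
    let e1 : axAn p →ₐ[ℂ] ℂ := (Pi.evalAlgHom ℂ (fun _ : ℂ => ℂ) z).comp (axAn p).val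
    let e2 : (U → ℂ) →ₐ[ℂ] ℂ := Pi.evalAlgHom ℂ (fun _ : U => ℂ) ⟨z, hz⟩
    change e1 _ = 0
    have h4 : e2 (MvPolynomial.aeval (fun i => Sum.elim (fun j => fun z : U => f j z)
        (fun j => fun z : U => Complex.exp (f j z)) (g i)) P) = 0 := by
      rw [hP, map_zero]
    rw [MvPolynomial.comp_aeval_apply] at h4 ⊢
    rw [← h4]
    congr 2
    ext i
    rcases h : g i with j | j <;> simp [e1, e2, G, fe]
  simp [axT_congr h3, axT_const]
end

section
/- Let U be a nonempty open connected subset of ℂ^n and let F : U → ℂ^n be a complex analytic map. Assume that for every w ∈ ℂ^n the fibre F^{-1}(w) = {z ∈ U : F(z) = w} is finite (possibly empty). Then F is an open map: the image under F of every open subset of U is open in ℂ^n. -/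
open Set Filter Topology Metric

/-- The derivative of a holomorphic map of several variables is holomorphic. -/
theorem OM_fderiv_apply_diff {n : ℕ} {U : Set (Fin n → ℂ)} (hU : IsOpen U)
    {F : (Fin n → ℂ) → (Fin n → ℂ)} (hF : ∀ z ∈ U, DifferentiableAt ℂ F z)
    (e : Fin n → ℂ) {z₀ : Fin n → ℂ} (hz₀ : z₀ ∈ U) :
    DifferentiableAt ℂ (fun z => fderiv ℂ F z e) z₀ := by
  have h1 : ∀ᶠ z in 𝓝 z₀, z ∈ U ∧ dist (F z) (F z₀) < 1 :=
    (hU.eventually_mem hz₀).and ((hF z₀ hz₀).continuousAt.eventually (ball_mem_nhds _ one_pos))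
  obtain ⟨ε, hε, hball⟩ := Metric.eventually_nhds_iff_ball.1 h1
  obtain ⟨ρ, hρ, hρε⟩ : ∃ ρ : ℝ, 0 < ρ ∧ 3 * ρ ≤ ε := ⟨ε / 3, by positivity, by linarith⟩
  obtain ⟨r, hr, hre⟩ : ∃ r : ℝ, 0 < r ∧ r * ‖e‖ < ρ := by
    refine ⟨ρ / (‖e‖ + 1), by positivity, ?_⟩
    rw [div_mul_eq_mul_div, div_lt_iff₀ (by positivity)]
    nlinarith [norm_nonneg e]
  -- points
  have hpt : ∀ z ∈ ball z₀ ρ, ∀ ζ ∈ closedBall (0:ℂ) r, z + ζ • e ∈ ball z₀ (2 * ρ) := by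
    intro z hz ζ hζ
    rw [mem_ball, dist_eq_norm] at *
    rw [mem_closedBall, dist_zero_right] at hζ
    calc ‖z + ζ • e - z₀‖ = ‖(z - z₀) + ζ • e‖ := by congr 1; abel
      _ ≤ ‖z - z₀‖ + ‖ζ‖ * ‖e‖ := by rw [← norm_smul]; exact norm_add_le _ _
      _ < 2 * ρ := by nlinarith [mul_le_mul_of_nonneg_right hζ (norm_nonneg e)]
  have hsub : ball z₀ (2 * ρ) ⊆ U := fun z hz => (hball z (ball_subset_ball (by linarith) hz)).1
  have hbd : ∀ z ∈ ball z₀ (2 * ρ), ‖fderiv ℂ F z‖ ≤ 2 / ρ := by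
    intro z hz
    have hs : ball z ρ ⊆ ball z₀ ε := ball_subset_ball' (by rw [mem_ball] at hz; linarith)
    refine Complex.norm_fderiv_le_div_of_mapsTo_ball
      (fun y hy => (hF y (hball y (hs hy)).1).differentiableWithinAt) ?_ hρ
    intro y hy
    rw [mem_closedBall]
    have h1 := (hball y (hs hy)).2
    have h2 := (hball z (hs (mem_ball_self hρ))).2
    linarith [dist_triangle_right (F y) (F z) (F z₀)]
  have hcauchy : ∀ z ∈ ball z₀ ρ, fderiv ℂ F z e
      = (2 * Real.pi * Complex.I : ℂ)⁻¹ • ∮ ζ in C(0, r), (1 / (ζ - 0) ^ 2) • F (z + ζ • e) := by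
    intro z hz
    have hd : ∀ ζ ∈ closedBall (0:ℂ) r,
        HasDerivAt (fun ζ : ℂ => F (z + ζ • e)) (fderiv ℂ F (z + ζ • e) e) ζ := by
      intro ζ hζ
      have h2 : HasDerivAt (fun ζ : ℂ => z + ζ • e) e ζ := by
        simpa using ((hasDerivAt_id ζ).smul_const e).const_add z
      exact (hF _ (hsub (hpt z hz ζ hζ))).hasFDerivAt.comp_hasDerivAt ζ h2
    rw [DifferentiableOn.deriv_eq_smul_circleIntegral hr
      (fun ζ hζ => (hd ζ hζ).differentiableAt.differentiableWithinAt),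
      smul_smul, inv_mul_cancel₀ Complex.two_pi_I_ne_zero, one_smul,
      (hd 0 (by simp [hr.le])).deriv]
    simp
  have hcm : ∀ θ : ℝ, circleMap 0 r θ ∈ closedBall (0:ℂ) r := fun θ =>
    circleMap_mem_closedBall _ hr.le _
  have hcont : ∀ z ∈ ball z₀ ρ, Continuous fun θ : ℝ =>
      deriv (circleMap 0 r) θ • (1 / (circleMap 0 r θ - 0) ^ 2) • F (z + circleMap 0 r θ • e) := by
    intro z hz
    have h1 : Continuous fun θ : ℝ => F (z + circleMap 0 r θ • e) := by
      rw [continuous_iff_continuousAt]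
      intro θ
      refine ContinuousAt.comp (f := fun θ : ℝ => z + circleMap 0 r θ • e)
        (hF _ (hsub (hpt z hz _ (hcm θ)))).continuousAt ?_
      fun_prop
    have h2 : Continuous fun θ : ℝ => (1 / (circleMap 0 r θ - 0) ^ 2) := by
      refine Continuous.div continuous_const (by fun_prop) ?_
      intro θ
      simpa using (circleMap_ne_center hr.ne' : circleMap 0 r θ ≠ 0)
    have h3 : Continuous fun θ : ℝ => deriv (circleMap 0 r) θ := by
      simp only [deriv_circleMap]; fun_prop
    exact h3.smul (h2.smul h1)
  have key : DifferentiableAt ℂ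
      (fun z => ∮ ζ in C(0, r), (1 / (ζ - 0) ^ 2) • F (z + ζ • e)) z₀ := by
    unfold circleIntegral
    refine (intervalIntegral.hasFDerivAt_integral_of_dominated_of_fderiv_le (𝕜 := ℂ)
      (s := ball z₀ ρ) (bound := fun _ => r * ((1 / r ^ 2) * (2 / ρ)))
      (F' := fun z θ => deriv (circleMap 0 r) θ • (1 / (circleMap 0 r θ - 0) ^ 2) •
        fderiv ℂ F (z + circleMap 0 r θ • e))
      (ball_mem_nhds _ hρ) ?_ ?_ ?_ ?_ ?_ ?_).differentiableAt
    · filter_upwards [ball_mem_nhds z₀ hρ] with z hz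
      exact (hcont z hz).aestronglyMeasurable
    · exact (hcont z₀ (mem_ball_self hρ)).intervalIntegrable _ _
    · have hm : Measurable fun θ : ℝ => fderiv ℂ F (z₀ + circleMap 0 r θ • e) :=
        (measurable_fderiv ℂ F).comp
          (by fun_prop : Continuous fun θ : ℝ => z₀ + circleMap 0 r θ • e).measurable
      have h2 : Continuous fun θ : ℝ => (1 / (circleMap 0 r θ - 0) ^ 2) := by
        refine Continuous.div continuous_const (by fun_prop) ?_
        intro θ
        simpa using (circleMap_ne_center hr.ne' : circleMap 0 r θ ≠ 0)
      have h3 : Continuous fun θ : ℝ => deriv (circleMap 0 r) θ := by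
        simp only [deriv_circleMap]; fun_prop
      have : ProperSpace ((Fin n → ℂ) →L[ℂ] (Fin n → ℂ)) := FiniteDimensional.proper ℂ _
      exact h3.aestronglyMeasurable.smul
        (h2.aestronglyMeasurable.smul hm.stronglyMeasurable.aestronglyMeasurable)
    · refine Eventually.of_forall fun θ _ z hz => ?_
      rw [norm_smul, norm_smul]
      have := hbd _ (hpt z hz _ (hcm θ))
      have e1 : ‖deriv (circleMap 0 r) θ‖ = r := by simp [deriv_circleMap, abs_of_pos hr]
      have e2 : ‖1 / (circleMap 0 r θ - 0) ^ 2‖ = 1 / r ^ 2 := by simp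
      rw [e1, e2]
      gcongr
    · exact intervalIntegrable_const
    · refine Eventually.of_forall fun θ _ z hz => ?_
      refine HasFDerivAt.fun_const_smul (HasFDerivAt.fun_const_smul ?_ _) _
      have h2 : HasFDerivAt (fun z => z + circleMap 0 r θ • e)
          (ContinuousLinearMap.id ℂ (Fin n → ℂ)) z := (hasFDerivAt_id z).add_const _
      exact (hF _ (hsub (hpt z hz _ (hcm θ)))).hasFDerivAt.comp z h2
  refine (key.const_smul (2 * Real.pi * Complex.I : ℂ)⁻¹).congr_of_eventuallyEq ?_
  filter_upwards [ball_mem_nhds z₀ hρ] with z hz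
  exact hcauchy z hz

theorem OM_contDiffAt {n : ℕ} {U : Set (Fin n → ℂ)} (hU : IsOpen U)
    {F : (Fin n → ℂ) → (Fin n → ℂ)} (hF : ∀ z ∈ U, DifferentiableAt ℂ F z)
    {z₀ : Fin n → ℂ} (hz₀ : z₀ ∈ U) : ContDiffAt ℂ 1 F z₀ := by
  have h : ContDiffOn ℂ (0 + 1) F U := by
    rw [contDiffOn_succ_iff_fderiv_of_isOpen hU]
    refine ⟨fun z hz => (hF z hz).differentiableWithinAt, by simp, ?_⟩
    rw [contDiffOn_clm_apply]
    intro e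
    rw [contDiffOn_zero]
    exact fun z hz => (OM_fderiv_apply_diff hU hF e hz).continuousAt.continuousWithinAt
  rw [zero_add] at h
  exact h.contDiffAt (hU.mem_nhds hz₀)

/-- The complex Jacobian determinant. -/
noncomputable def OM_J {n : ℕ} (F : (Fin n → ℂ) → (Fin n → ℂ)) (z : Fin n → ℂ) : ℂ :=
  Matrix.det (LinearMap.toMatrix' (fderiv ℂ F z : (Fin n → ℂ) →ₗ[ℂ] (Fin n → ℂ)))

theorem OM_J_diff {n : ℕ} {U : Set (Fin n → ℂ)} (hU : IsOpen U)
    {F : (Fin n → ℂ) → (Fin n → ℂ)} (hF : ∀ z ∈ U, DifferentiableAt ℂ F z)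
    {z₀ : Fin n → ℂ} (hz₀ : z₀ ∈ U) : DifferentiableAt ℂ (OM_J F) z₀ := by
  have hentry : ∀ i j : Fin n, DifferentiableAt ℂ
      (fun z => fderiv ℂ F z (Pi.single j 1) i) z₀ := fun i j =>
    (differentiableAt_pi.1 (OM_fderiv_apply_diff hU hF (Pi.single j 1) hz₀)) i
  have : OM_J F = fun z => ∑ σ : Equiv.Perm (Fin n), ((Equiv.Perm.sign σ : ℤ) : ℂ) *
      ∏ i, fderiv ℂ F z (Pi.single i 1) (σ i) := by
    funext z
    simp only [OM_J, Matrix.det_apply', LinearMap.toMatrix'_apply]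
    rfl
  rw [this]
  refine DifferentiableAt.fun_sum fun σ _ => ?_
  refine DifferentiableAt.const_mul ?_ _
  exact (HasFDerivAt.finset_prod (u := Finset.univ)
    (g := fun i z => fderiv ℂ F z (Pi.single i 1) (σ i))
    fun i _ => (hentry (σ i) i).hasFDerivAt).differentiableAt

theorem OM_J_ne {n : ℕ} {F : (Fin n → ℂ) → (Fin n → ℂ)} {z : Fin n → ℂ} (h : OM_J F z ≠ 0) :
    ∃ L : (Fin n → ℂ) ≃L[ℂ] (Fin n → ℂ), (L : (Fin n → ℂ) →L[ℂ] (Fin n → ℂ)) = fderiv ℂ F z := by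
  rw [OM_J, LinearMap.det_toMatrix'] at h
  refine ⟨(LinearEquiv.ofIsUnitDet (f := (fderiv ℂ F z : (Fin n → ℂ) →ₗ[ℂ] (Fin n → ℂ)))
    (v := Pi.basisFun ℂ (Fin n)) (v' := Pi.basisFun ℂ (Fin n)) ?_).toContinuousLinearEquiv, ?_⟩
  · rw [LinearMap.det_toMatrix]; exact isUnit_iff_ne_zero.2 h
  · ext x; rfl

theorem OM_J_eq {n : ℕ} {F : (Fin n → ℂ) → (Fin n → ℂ)} {z : Fin n → ℂ} (h : OM_J F z = 0) :
    ∃ e : Fin n → ℂ, e ≠ 0 ∧ fderiv ℂ F z e = 0 := by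
  rw [OM_J, LinearMap.det_toMatrix'] at h
  obtain ⟨e, he, h0⟩ := (Submodule.ne_bot_iff _).1 (LinearMap.bot_lt_ker_of_det_eq_zero h).ne'
  exact ⟨e, h0, by simpa using he⟩

/-- Reflexive generalized inverse of a linear endomorphism. -/
theorem OM_ginv {n : ℕ} (L : (Fin n → ℂ) →ₗ[ℂ] (Fin n → ℂ)) :
    ∃ S : (Fin n → ℂ) →ₗ[ℂ] (Fin n → ℂ), (∀ x, L (S (L x)) = L x) ∧ ∀ y, S (L (S y)) = S y := by
  obtain ⟨R, hR⟩ := L.rangeRestrict.exists_rightInverse_of_surjective L.range_rangeRestrict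
  obtain ⟨p, hp⟩ := L.range.subtype.exists_leftInverse_of_injective L.range.ker_subtype
  have hR' : ∀ y : L.range, L (R y) = y := fun y =>
    congrArg Subtype.val (LinearMap.congr_fun hR y)
  have hp' : ∀ y : L.range, p (y : Fin n → ℂ) = y := fun y => LinearMap.congr_fun hp y
  refine ⟨R.comp p, fun x => ?_, fun y => ?_⟩
  · have := hp' ⟨L x, LinearMap.mem_range_self L x⟩
    simp only [LinearMap.comp_apply] at *
    rw [this, hR']
  · simp only [LinearMap.comp_apply]
    rw [hR', hp']

/-- If the Jacobian vanishes on a nonempty open set then some fibre is infinite. -/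
theorem OM_J_zero {n : ℕ} {V : Set (Fin n → ℂ)} (hV : IsOpen V) (hne : V.Nonempty)
    {F : (Fin n → ℂ) → (Fin n → ℂ)} (hF : ∀ z ∈ V, DifferentiableAt ℂ F z)
    (hJ : ∀ z ∈ V, OM_J F z = 0) : ∃ w, {z ∈ V | F z = w}.Infinite := by
  let k : (Fin n → ℂ) → ℕ := fun z =>
    Module.finrank ℂ (LinearMap.ker (fderiv ℂ F z : (Fin n → ℂ) →ₗ[ℂ] (Fin n → ℂ)))
  obtain ⟨z₁, hz₁, hmin⟩ : ∃ z₁ ∈ V, ∀ z ∈ V, k z₁ ≤ k z := by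
    obtain ⟨m, ⟨z, hz, rfl⟩, hm⟩ := wellFounded_lt.has_min (k '' V) (hne.image k)
    exact ⟨z, hz, fun y hy => not_lt.1 (hm _ (mem_image_of_mem k hy))⟩
  obtain ⟨e, he0, he⟩ := OM_J_eq (hJ z₁ hz₁)
  obtain ⟨S', hS1, hS2⟩ := OM_ginv (fderiv ℂ F z₁ : (Fin n → ℂ) →ₗ[ℂ] (Fin n → ℂ))
  set L := fderiv ℂ F z₁ with hL
  let S : (Fin n → ℂ) →L[ℂ] (Fin n → ℂ) := LinearMap.toContinuousLinearMap S'
  have hLSL : ∀ x, L (S (L x)) = L x := hS1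
  have hSLS : ∀ x, S (L (S x)) = S x := hS2
  -- the straightening map
  let Ψ : (Fin n → ℂ) → (Fin n → ℂ) := fun z => S (F z) + (z - S (L z))
  have hΨd : ∀ z ∈ V, HasFDerivAt Ψ (S.comp (fderiv ℂ F z) +
      (ContinuousLinearMap.id ℂ (Fin n → ℂ) - S.comp L)) z := by
    intro z hz
    exact (S.hasFDerivAt.comp z (hF z hz).hasFDerivAt).add
      ((hasFDerivAt_id z).sub (S.comp L).hasFDerivAt)
  have hΨc : ∀ z ∈ V, ContDiffAt ℂ 1 Ψ z := by
    intro z hz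
    have h1 : ContDiffAt ℂ 1 (fun z => S (F z)) z :=
      S.contDiff.contDiffAt.comp z (OM_contDiffAt hV hF hz)
    exact h1.add (contDiffAt_id.sub (S.comp L).contDiff.contDiffAt)
  have hSLΨ : ∀ z, S (L (Ψ z)) = S (F z) := by
    intro z; simp [Ψ, map_add, map_sub, hSLS]
  have hΨ1 : HasFDerivAt Ψ
      ((ContinuousLinearEquiv.refl ℂ (Fin n → ℂ) : (Fin n → ℂ) ≃L[ℂ] (Fin n → ℂ)) :
        (Fin n → ℂ) →L[ℂ] (Fin n → ℂ)) z₁ := by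
    refine (hΨd z₁ hz₁).congr_fderiv ?_
    ext1 x
    simp [← hL]
  have h10 : (1 : WithTop ℕ∞) ≠ 0 := one_ne_zero
  let g := (hΨc z₁ hz₁).localInverse hΨ1 h10
  have hg : ContDiffAt ℂ 1 g (Ψ z₁) := (hΨc z₁ hz₁).to_localInverse hΨ1 h10
  have hgz : g (Ψ z₁) = z₁ := (hΨc z₁ hz₁).localInverse_apply_image hΨ1 h10
  have hgr : ∀ᶠ y in 𝓝 (Ψ z₁), Ψ (g y) = y :=
    ((hΨc z₁ hz₁).hasStrictFDerivAt' hΨ1 h10).eventually_right_inverse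
  have hgd : ∀ᶠ y in 𝓝 (Ψ z₁), DifferentiableAt ℂ g y :=
    (hg.eventually (by simp)).mono fun y hy => hy.differentiableAt one_ne_zero
  have hgV : ∀ᶠ y in 𝓝 (Ψ z₁), g y ∈ V :=
    hg.continuousAt.eventually (by rw [hgz]; exact hV.mem_nhds hz₁)
  -- move along the line
  have hline : Tendsto (fun t : ℂ => Ψ z₁ + t • e) (𝓝 0) (𝓝 (Ψ z₁)) := by
    have : Continuous fun t : ℂ => Ψ z₁ + t • e := by fun_prop
    simpa using this.tendsto 0
  have hev := hline.eventually (hgr.eventually_nhds.and (hgd.and hgV))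
  obtain ⟨ε, hε, hball⟩ := Metric.eventually_nhds_iff_ball.1 hev
  let c : ℂ → (Fin n → ℂ) := fun t => g (Ψ z₁ + t • e)
  have hΨcurve : ∀ t ∈ ball (0:ℂ) ε, Ψ (c t) = Ψ z₁ + t • e := fun t ht =>
    (hball t ht).1.self_of_nhds
  have hcV : ∀ t ∈ ball (0:ℂ) ε, c t ∈ V := fun t ht => (hball t ht).2.2
  have hcd : ∀ t ∈ ball (0:ℂ) ε, DifferentiableAt ℂ c t := by
    intro t ht
    exact (hball t ht).2.1.comp t (by fun_prop)
  -- kernel equality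
  have hker : ∀ t ∈ ball (0:ℂ) ε, ∀ x, S (fderiv ℂ F (c t) x) = 0 → fderiv ℂ F (c t) x = 0 := by
    intro t ht
    have hy := hball t ht
    set y := Ψ z₁ + t • e with hydef
    set z := c t with hz
    set D := fderiv ℂ F z with hD
    set M := S.comp D + (ContinuousLinearMap.id ℂ (Fin n → ℂ) - S.comp L) with hM
    have hMg : HasFDerivAt (Ψ ∘ g) (M.comp (fderiv ℂ g y)) y :=
      (hΨd z (hcV t ht)).comp y hy.2.1.hasFDerivAt
    have hid : M.comp (fderiv ℂ g y) = ContinuousLinearMap.id ℂ _ := by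
      refine hMg.unique ((hasFDerivAt_id y).congr_of_eventuallyEq ?_)
      exact hy.1
    have hsurj : Function.Surjective M := fun x =>
      ⟨fderiv ℂ g y x, by simpa using DFunLike.congr_fun hid x⟩
    have hinj : Function.Injective (M : (Fin n → ℂ) →ₗ[ℂ] (Fin n → ℂ)) :=
      LinearMap.injective_iff_surjective.2 hsurj
    have hSLM : ∀ x, S (L (M x)) = S (D x) := by
      intro x; simp [hM, map_add, map_sub, hSLS]
    have hle : LinearMap.ker (D : (Fin n → ℂ) →ₗ[ℂ] (Fin n → ℂ)) ≤
        LinearMap.ker ((S.comp D : (Fin n → ℂ) →L[ℂ] (Fin n → ℂ)) : (Fin n → ℂ) →ₗ[ℂ] (Fin n → ℂ)) := by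
      intro x hx
      have hx' : D x = 0 := by simpa using hx
      simp [hx']
    have hmap : (LinearMap.ker ((S.comp D : (Fin n → ℂ) →L[ℂ] (Fin n → ℂ)) :
        (Fin n → ℂ) →ₗ[ℂ] (Fin n → ℂ))).map (M : (Fin n → ℂ) →ₗ[ℂ] (Fin n → ℂ)) ≤
        LinearMap.ker (L : (Fin n → ℂ) →ₗ[ℂ] (Fin n → ℂ)) := by
      rintro _ ⟨x, hx, rfl⟩
      have hx' : S (D x) = 0 := by simpa using hx
      have : L (M x) = 0 := by rw [← hLSL, hSLM, hx', map_zero]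
      simpa using this
    have hfr := Submodule.finrank_mono hmap
    rw [← (Submodule.equivMapOfInjective _ hinj _).finrank_eq] at hfr
    have heq := Submodule.eq_of_le_of_finrank_le hle (hfr.trans (hmin z (hcV t ht)))
    intro x hx
    have : x ∈ LinearMap.ker (D : (Fin n → ℂ) →ₗ[ℂ] (Fin n → ℂ)) := by
      rw [heq]; simpa using hx
    simpa using this
  have hder : ∀ t ∈ ball (0:ℂ) ε, HasDerivAt (fun t => F (c t)) 0 t := by
    intro t ht
    have h1 : HasDerivAt (fun t => F (c t)) (fderiv ℂ F (c t) (deriv c t)) t :=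
      (hF _ (hcV t ht)).hasFDerivAt.comp_hasDerivAt t (hcd t ht).hasDerivAt
    have h2 : HasDerivAt (fun t => S (F (c t))) (S (fderiv ℂ F (c t) (deriv c t))) t :=
      S.hasFDerivAt.comp_hasDerivAt t h1
    have h3 : HasDerivAt (fun t => S (F (c t))) 0 t := by
      refine (hasDerivAt_const t (S (L (Ψ z₁)))).congr_of_eventuallyEq ?_
      filter_upwards [isOpen_ball.mem_nhds ht] with s hs
      rw [← hSLΨ, hΨcurve s hs]
      simp [he]
    rw [hker t ht _ (h2.unique h3)] at h1
    exact h1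
  have hconst : ∀ t ∈ ball (0:ℂ) ε, F (c t) = F (c 0) := by
    intro t ht
    refine (convex_ball (0:ℂ) ε).is_const_of_fderivWithin_eq_zero (𝕜 := ℂ)
      (f := fun t => F (c t)) (fun s hs => (hder s hs).differentiableAt.differentiableWithinAt)
      (fun s hs => ?_) ht (mem_ball_self hε)
    rw [fderivWithin_of_isOpen isOpen_ball hs, (hder s hs).hasFDerivAt.fderiv]
    ext; simp
  refine ⟨F (c 0), ?_⟩
  have hinf : (ball (0:ℂ) ε).Infinite := infinite_of_mem_nhds 0 (ball_mem_nhds _ hε)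
  refine (hinf.image (f := c) ?_).mono ?_
  · intro s hs t ht hst
    have h := congrArg Ψ hst
    rw [hΨcurve s hs, hΨcurve t ht] at h
    exact smul_left_injective ℂ he0 (add_left_cancel h)
  · rintro _ ⟨t, ht, rfl⟩
    exact ⟨hcV t ht, hconst t ht⟩

/-- Key step: if `w₀` is omitted on the closed ball and `F` stays far from `w₀` on the sphere, then
`J` is dominated by powers of `‖F - w₀‖`. -/
theorem OM_key {n : ℕ} {U : Set (Fin n → ℂ)} (hU : IsOpen U)
    {F : (Fin n → ℂ) → (Fin n → ℂ)} (hF : ∀ z ∈ U, DifferentiableAt ℂ F z)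
    {z₀ w₀ : Fin n → ℂ} {δ ρ M : ℝ} (hρ : 0 < ρ) (hsub : closedBall z₀ δ ⊆ U)
    (hom : ∀ z ∈ closedBall z₀ δ, F z ≠ w₀) (hsph : ∀ z ∈ sphere z₀ δ, ρ < ‖F z - w₀‖)
    (hM : ∀ z ∈ closedBall z₀ δ, ‖OM_J F z‖ ≤ M) (K : ℕ) :
    ∀ z ∈ closedBall z₀ δ, ‖F z - w₀‖ ≤ ρ → ‖OM_J F z‖ ≤ M * (‖F z - w₀‖ / ρ) ^ K := by
  have hFc : ContinuousOn F (closedBall z₀ δ) := fun z hz =>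
    (hF z (hsub hz)).continuousAt.continuousWithinAt
  have hJc : ContinuousOn (OM_J F) (closedBall z₀ δ) := fun z hz =>
    (OM_J_diff hU hF (hsub hz)).continuousAt.continuousWithinAt
  have hNc : ContinuousOn (fun z => ‖F z - w₀‖) (closedBall z₀ δ) :=
    (hFc.sub continuousOn_const).norm
  have hNpos : ∀ z ∈ closedBall z₀ δ, 0 < ‖F z - w₀‖ := fun z hz =>
    norm_pos_iff.2 (sub_ne_zero.2 (hom z hz))
  let Φ : (Fin n → ℂ) → ℝ := fun z => ‖OM_J F z‖ / ‖F z - w₀‖ ^ K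
  have hΦc : ContinuousOn Φ (closedBall z₀ δ) :=
    hJc.norm.div (hNc.pow K) fun z hz => (pow_pos (hNpos z hz) K).ne'
  let C : Set (Fin n → ℂ) := closedBall z₀ δ ∩ (fun z => ‖F z - w₀‖) ⁻¹' Iic ρ
  have hCsub : C ⊆ closedBall z₀ δ := inter_subset_left
  have hC : IsCompact C := (isCompact_closedBall z₀ δ).of_isClosed_subset
    (hNc.preimage_isClosed_of_isClosed isClosed_closedBall isClosed_Iic) hCsub
  intro z hz hzρ
  have hzC : z ∈ C := ⟨hz, hzρ⟩
  obtain ⟨z₂, hz₂, hmax⟩ := hC.exists_isMaxOn ⟨z, hzC⟩ (hΦc.mono hCsub)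
  let S : Set (Fin n → ℂ) := C ∩ Φ ⁻¹' {Φ z₂}
  have hS : IsCompact S := hC.of_isClosed_subset
    ((hΦc.mono hCsub).preimage_isClosed_of_isClosed hC.isClosed isClosed_singleton)
    inter_subset_left
  obtain ⟨z₁, hz₁, hmax₁⟩ := hS.exists_isMaxOn ⟨z₂, hz₂, rfl⟩
    (hNc.mono (inter_subset_left.trans hCsub))
  have hΦmax : ∀ y ∈ C, Φ y ≤ Φ z₁ := fun y hy => by
    have h1 : Φ z₁ = Φ z₂ := hz₁.2
    rw [h1]; exact hmax hy
  have hz₁B : z₁ ∈ closedBall z₀ δ := hCsub hz₁.1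
  have hMnn : 0 ≤ M := (norm_nonneg _).trans (hM z hz)
  have hzpos := hNpos z hz
  -- it suffices to bound the maximum
  suffices hb : Φ z₁ ≤ M / ρ ^ K by
    have h1 := (hΦmax z hzC).trans hb
    rw [div_le_iff₀ (by positivity)] at h1
    rw [div_pow]
    calc _ ≤ _ := h1
      _ = _ := by ring
  by_cases hJ0 : OM_J F z₁ = 0
  · simp only [Φ, hJ0, norm_zero, zero_div]; positivity
  rcases (show ‖F z₁ - w₀‖ ≤ ρ from hz₁.1.2).eq_or_lt with heq | hlt
  · simp only [Φ, heq]
    gcongr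
    exact hM z₁ hz₁B
  exfalso
  have hz₁ball : z₁ ∈ ball z₀ δ := by
    rw [mem_ball]
    refine lt_of_le_of_ne hz₁B fun h => ?_
    exact absurd (hsph z₁ h) (not_lt.2 hlt.le)
  obtain ⟨L, hL⟩ := OM_J_ne hJ0
  have hFc1 := OM_contDiffAt hU hF (hsub hz₁B)
  have hF1 : HasFDerivAt F (L : (Fin n → ℂ) →L[ℂ] (Fin n → ℂ)) z₁ := by
    rw [hL]; exact (hF z₁ (hsub hz₁B)).hasFDerivAt
  have h10 : (1 : WithTop ℕ∞) ≠ 0 := one_ne_zero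
  let g := hFc1.localInverse hF1 h10
  have hg : ContDiffAt ℂ 1 g (F z₁) := hFc1.to_localInverse hF1 h10
  have hgz : g (F z₁) = z₁ := hFc1.localInverse_apply_image hF1 h10
  have hgr : ∀ᶠ y in 𝓝 (F z₁), F (g y) = y :=
    (hFc1.hasStrictFDerivAt' hF1 h10).eventually_right_inverse
  have hgd : ∀ᶠ y in 𝓝 (F z₁), DifferentiableAt ℂ g y :=
    (hg.eventually (by simp)).mono fun y hy => hy.differentiableAt one_ne_zero
  have hgB : ∀ᶠ y in 𝓝 (F z₁), g y ∈ ball z₀ δ :=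
    hg.continuousAt.eventually (by rw [hgz]; exact isOpen_ball.mem_nhds hz₁ball)
  have hgρ : ∀ᶠ y in 𝓝 (F z₁), ‖y - w₀‖ < ρ :=
    (by fun_prop : Continuous fun y => ‖y - w₀‖).continuousAt.eventually (gt_mem_nhds hlt)
  set e := F z₁ - w₀ with he
  have hepos : 0 < ‖e‖ := hNpos z₁ hz₁B
  have hline : Tendsto (fun t : ℂ => w₀ + t • e) (𝓝 1) (𝓝 (F z₁)) := by
    have : Continuous fun t : ℂ => w₀ + t • e := by fun_prop
    simpa [he] using this.tendsto 1
  have hev := (hline.eventually (hgr.and (hgd.and (hgB.and hgρ)))).and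
    (eventually_ne_nhds (one_ne_zero : (1:ℂ) ≠ 0))
  let h : ℂ → ℂ := fun t => OM_J F (g (w₀ + t • e)) / t ^ K
  have hone : w₀ + (1:ℂ) • e = F z₁ := by simp [he]
  have hprop : ∀ᶠ t in 𝓝 (1:ℂ), g (w₀ + t • e) ∈ C ∧ ‖F (g (w₀ + t • e)) - w₀‖ = ‖t‖ * ‖e‖ ∧
      ‖h t‖ = Φ (g (w₀ + t • e)) * ‖e‖ ^ K := by
    filter_upwards [hev] with t ht
    obtain ⟨⟨h1, h2, h3, h4⟩, h5⟩ := ht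
    have hn : ‖F (g (w₀ + t • e)) - w₀‖ = ‖t‖ * ‖e‖ := by
      rw [h1, add_sub_cancel_left, norm_smul]
    refine ⟨⟨ball_subset_closedBall h3, ?_⟩, hn, ?_⟩
    · show ‖F (g (w₀ + t • e)) - w₀‖ ≤ ρ
      rw [h1]; exact h4.le
    · have : 0 < ‖t‖ := norm_pos_iff.2 h5
      simp only [h, Φ, hn, norm_div, norm_pow]
      rw [mul_pow]
      field_simp
  have hhd : ∀ᶠ t in 𝓝 (1:ℂ), DifferentiableAt ℂ h t := by
    filter_upwards [hev] with t ht
    obtain ⟨⟨h1, h2, h3, h4⟩, h5⟩ := ht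
    have a1 : DifferentiableAt ℂ (fun t : ℂ => g (w₀ + t • e)) t :=
      DifferentiableAt.comp t (f := fun t : ℂ => w₀ + t • e) h2 (by fun_prop)
    have a2 : DifferentiableAt ℂ (fun t : ℂ => OM_J F (g (w₀ + t • e))) t :=
      DifferentiableAt.comp t (f := fun t : ℂ => g (w₀ + t • e))
        (OM_J_diff hU hF (hsub (ball_subset_closedBall h3))) a1
    exact a2.div (by fun_prop) (pow_ne_zero K h5)
  have hh1 : ‖h 1‖ = Φ z₁ * ‖e‖ ^ K := by
    have := hprop.self_of_nhds.2.2
    rwa [hone, hgz] at this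
  have hloc : IsLocalMax (norm ∘ h) 1 := by
    filter_upwards [hprop] with t ht
    simp only [Function.comp_apply]
    rw [ht.2.2, hh1]
    gcongr
    exact hΦmax _ ht.1
  have hcst := Complex.eventually_eq_of_isLocalMax_norm hhd hloc
  obtain ⟨ε, hε, hball⟩ := Metric.eventually_nhds_iff_ball.1 (hcst.and hprop)
  have ht := hball (1 + (ε / 2 : ℝ)) (by
    rw [mem_ball, dist_eq_norm, add_sub_cancel_left, Complex.norm_real, Real.norm_eq_abs,
      abs_of_pos (by positivity)]
    linarith)
  obtain ⟨b1, b2, b3, b4⟩ := ht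
  rw [b1, hh1] at b4
  have b5 := mul_right_cancel₀ (pow_pos hepos K).ne' b4
  have b6 := hmax₁ (show g (w₀ + (1 + (ε / 2 : ℝ) : ℂ) • e) ∈ S from
    ⟨b2, by
      show Φ _ = Φ z₂
      rw [← b5]; exact hz₁.2⟩)
  have b7 : ‖F (g (w₀ + (1 + (ε / 2 : ℝ) : ℂ) • e)) - w₀‖ ≤ ‖e‖ := b6
  rw [b3] at b7
  have b8 : ‖(1 + (ε / 2 : ℝ) : ℂ)‖ = 1 + ε / 2 := by
    rw [← Complex.ofReal_one, ← Complex.ofReal_add, Complex.norm_real, Real.norm_eq_abs,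
      abs_of_pos (by positivity)]
  rw [b8] at b7
  nlinarith

/-- Special case of the open mapping theorem: a complex analytic map
`F : U → ℂⁿ` on a domain `U ⊆ ℂⁿ` with finite fibres is an open map. -/
theorem open_mapping_finite_fibres (n : ℕ) (U : Set (Fin n → ℂ))
    (hU : IsOpen U) (hUc : IsConnected U)
    (F : (Fin n → ℂ) → (Fin n → ℂ)) (hF : ∀ z ∈ U, DifferentiableAt ℂ F z)
    (hfib : ∀ w : Fin n → ℂ, {z ∈ U | F z = w}.Finite) :
    ∀ V ⊆ U, IsOpen V → IsOpen (F '' V) := by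
  intro V hVU hV
  rw [isOpen_iff_mem_nhds]
  rintro _ ⟨z₀, hz₀, rfl⟩
  have hfin : ({z ∈ U | F z = F z₀} \ {z₀}).Finite := (hfib (F z₀)).subset sdiff_subset
  have hiso : ∀ᶠ z in 𝓝 z₀, z ∈ V ∩ ({z ∈ U | F z = F z₀} \ {z₀})ᶜ :=
    (hV.inter hfin.isClosed.isOpen_compl).mem_nhds ⟨hz₀, by simp⟩
  obtain ⟨δ, hδ, hball⟩ := Metric.nhds_basis_closedBall.eventually_iff.1 hiso
  have hsubV : closedBall z₀ δ ⊆ V := fun z hz => (hball hz).1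
  have hsub := hsubV.trans hVU
  have hcont : ContinuousOn F (closedBall z₀ δ) := fun z hz =>
    (hF z (hsub hz)).continuousAt.continuousWithinAt
  obtain ⟨ρ', hρ', hsph⟩ := (isCompact_sphere z₀ δ).exists_forall_le' (a := 0)
    (f := fun z => ‖F z - F z₀‖)
    ((hcont.mono sphere_subset_closedBall).sub continuousOn_const).norm (by
      intro z hz
      rw [norm_pos_iff, sub_ne_zero]
      intro h
      refine (hball (sphere_subset_closedBall hz)).2 ⟨⟨hsub (sphere_subset_closedBall hz), h⟩, ?_⟩
      rintro rfl
      simp [hδ.ne] at hz)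
  have hJc : ContinuousOn (OM_J F) (closedBall z₀ δ) := fun z hz =>
    (OM_J_diff hU hF (hsub hz)).continuousAt.continuousWithinAt
  obtain ⟨M, hM⟩ := (isCompact_closedBall z₀ δ).exists_bound_of_continuousOn hJc
  refine mem_of_superset (ball_mem_nhds (F z₀) (by positivity : 0 < ρ' / 3)) ?_
  intro w₀ hw₀
  by_contra hnot
  have hw : ‖F z₀ - w₀‖ < ρ' / 3 := by
    rw [mem_ball, dist_eq_norm, norm_sub_rev] at hw₀; exact hw₀
  have hkey := OM_key hU hF (w₀ := w₀) (ρ := ρ' / 3) (by positivity) hsub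
    (fun z hz h => hnot ⟨z, hsubV hz, h⟩)
    (fun z hz => by
      have h1 := hsph z hz
      have h2 := norm_sub_le_norm_sub_add_norm_sub (F z) w₀ (F z₀)
      rw [norm_sub_rev w₀] at h2
      linarith) hM
  have hnear : ∀ᶠ z in 𝓝 z₀, z ∈ closedBall z₀ δ ∧ ‖F z - w₀‖ < ρ' / 3 :=
    Filter.Eventually.and (closedBall_mem_nhds _ hδ)
      (((hF z₀ (hVU hz₀)).continuousAt.sub continuousAt_const).norm.eventually (gt_mem_nhds hw))
  obtain ⟨ε, hε, hε'⟩ := Metric.eventually_nhds_iff_ball.1 hnear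
  obtain ⟨w, hw⟩ := OM_J_zero (V := ball z₀ ε) isOpen_ball ⟨z₀, mem_ball_self hε⟩
    (fun z hz => hF z (hsub (hε' z hz).1)) (by
      intro z hz
      obtain ⟨hz1, hz2⟩ := hε' z hz
      have hlim : Tendsto (fun K : ℕ => M * (‖F z - w₀‖ / (ρ' / 3)) ^ K) atTop (𝓝 (M * 0)) :=
        (tendsto_pow_atTop_nhds_zero_of_lt_one (by positivity)
          ((div_lt_one (by positivity)).2 hz2)).const_mul M
      rw [mul_zero] at hlim
      exact norm_le_zero_iff.1 (ge_of_tendsto' hlim fun K => hkey K z hz1 hz2.le))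
  exact hw ((hfib w).subset fun z hz => ⟨hsub (hε' z hz.1).1, hz.2⟩)
end

section
/- Let f ∈ ℂ[X, Y] be an irreducible polynomial in two variables with positive degree in X and positive degree in Y. Then there exists z ∈ ℂ such that f(z, exp(z)) = 0; that is, the algebraic curve {(z, w) ∈ ℂ × ℂˣ : f(z, w) = 0} contains a point of the form (z, exp(z)). -/
/-- Growth of `f(z, exp z)`. -/
lemma growth_aux (f : MvPolynomial (Fin 2) ℂ) :
    ∃ C K : ℝ, 0 < C ∧ 0 < K ∧
      ∀ z : ℂ, ‖MvPolynomial.eval ![z, Complex.exp z] f‖ ≤ C * Real.exp (K * ‖z‖) := by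
  induction f using MvPolynomial.induction_on with
  | C a =>
    refine ⟨‖a‖ + 1, 1, by positivity, one_pos, fun z => ?_⟩
    have h1 : 1 ≤ Real.exp (1 * ‖z‖) := Real.one_le_exp (by positivity)
    have := norm_nonneg a
    simp only [MvPolynomial.eval_C]
    nlinarith
  | add p q hp hq =>
    obtain ⟨C, K, hC, hK, h⟩ := hp
    obtain ⟨C', K', hC', hK', h'⟩ := hq
    refine ⟨C + C', K + K', by positivity, by positivity, fun z => ?_⟩
    have e1 : Real.exp (K * ‖z‖) ≤ Real.exp ((K + K') * ‖z‖) := by gcongr; linarith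
    have e2 : Real.exp (K' * ‖z‖) ≤ Real.exp ((K + K') * ‖z‖) := by gcongr; linarith
    rw [map_add]
    calc _ ≤ _ := norm_add_le _ _
      _ ≤ _ := add_le_add (h z) (h' z)
      _ ≤ C * Real.exp ((K + K') * ‖z‖) + C' * Real.exp ((K + K') * ‖z‖) := by gcongr
      _ = _ := by ring
  | mul_X p i hp =>
    obtain ⟨C, K, hC, hK, h⟩ := hp
    refine ⟨C, K + 1, hC, by positivity, fun z => ?_⟩
    rw [map_mul, norm_mul, MvPolynomial.eval_X]
    have hi : ‖(![z, Complex.exp z] : Fin 2 → ℂ) i‖ ≤ Real.exp ‖z‖ := by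
      fin_cases i
      · simp only [Fin.zero_eta, Matrix.cons_val_zero]
        linarith [Real.add_one_le_exp ‖z‖]
      · simp only [Fin.mk_one, Matrix.cons_val_one, Matrix.cons_val_fin_one, Complex.norm_exp]
        exact Real.exp_le_exp.2 (Complex.re_le_norm z)
    calc _ ≤ (C * Real.exp (K * ‖z‖)) * Real.exp ‖z‖ := by
          gcongr
          exact h z
      _ = _ := by rw [mul_assoc, ← Real.exp_add]; ring_nf

lemma hasDerivAt_aux (f : MvPolynomial (Fin 2) ℂ) (z : ℂ) :
    HasDerivAt (fun z => MvPolynomial.eval ![z, Complex.exp z] f)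
      (MvPolynomial.eval ![z, Complex.exp z]
        (MvPolynomial.pderiv 0 f + MvPolynomial.X 1 * MvPolynomial.pderiv 1 f)) z := by
  induction f using MvPolynomial.induction_on with
  | C a => simpa using hasDerivAt_const z a
  | add p q hp hq =>
    have e : (fun z => MvPolynomial.eval ![z, Complex.exp z] (p + q)) =
        (fun z => MvPolynomial.eval ![z, Complex.exp z] p) +
          fun z => MvPolynomial.eval ![z, Complex.exp z] q := by
      funext w; simp
    rw [e]
    refine (hp.add hq).congr_deriv ?_
    simp; ring
  | mul_X p i hp =>
    have hi : HasDerivAt (fun z => (![z, Complex.exp z] : Fin 2 → ℂ) i)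
        ((![1, Complex.exp z] : Fin 2 → ℂ) i) z := by
      fin_cases i
      · exact hasDerivAt_id z
      · simpa using Complex.hasDerivAt_exp z
    have e : (fun z => MvPolynomial.eval ![z, Complex.exp z] (p * MvPolynomial.X i)) =
        (fun z => MvPolynomial.eval ![z, Complex.exp z] p) *
          fun z => (![z, Complex.exp z] : Fin 2 → ℂ) i := by
      funext w; simp
    rw [e]
    refine (hp.mul hi).congr_deriv ?_
    fin_cases i
    · simp [MvPolynomial.pderiv_mul, MvPolynomial.pderiv_X]; ring
    · simp [MvPolynomial.pderiv_mul, MvPolynomial.pderiv_X]; ring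

lemma linear_aux (g : ℂ → ℂ) (hg : Differentiable ℂ g) (A : ℝ) (hA : 0 < A)
    (h : ∀ z, (g z).re ≤ A * (1 + ‖z‖)) : ∃ a, ∀ z, deriv g z = a := by
  have hB : ∀ z, ‖g z‖ ≤ (4 * A + 3 * ‖g 0‖) * (1 + ‖z‖) := by
    intro z
    have hz := norm_nonneg z
    have := Complex.borelCaratheodory (f := g) (M := A * (2 + 2 * ‖z‖)) (R := 2 * ‖z‖ + 1)
      (z := z) (by positivity) hg.differentiableOn
      (by
        intro w hw
        rw [mem_ball_zero_iff] at hw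
        refine (h w).trans ?_
        exact mul_le_mul_of_nonneg_left (by linarith) hA.le)
      (by positivity) (by rw [mem_ball_zero_iff]; linarith)
    refine this.trans ?_
    have e : 2 * ‖z‖ + 1 - ‖z‖ = 1 + ‖z‖ := by ring
    rw [e, ← add_div, div_le_iff₀ (by positivity)]
    have := norm_nonneg (g 0)
    nlinarith [mul_nonneg this hz, mul_nonneg hA.le hz, mul_nonneg (mul_nonneg this hz) hz,
      mul_nonneg (mul_nonneg hA.le hz) hz]
  set B := 4 * A + 3 * ‖g 0‖ with hBdef
  have hB0 : 0 < B := by positivity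
  have h2 : ∀ c, deriv (deriv g) c = 0 := by
    intro c
    rw [← norm_le_zero_iff]
    have ht : Filter.Tendsto (fun R : ℝ => 4 * B / R) Filter.atTop (nhds 0) :=
      Filter.Tendsto.const_div_atTop Filter.tendsto_id _
    refine ge_of_tendsto ht ?_
    filter_upwards [Filter.eventually_ge_atTop (1 + ‖c‖)] with R hR
    have hc := norm_nonneg c
    have hR0 : 0 < R := by linarith
    have := Complex.norm_iteratedDeriv_le_of_forall_mem_sphere_norm_le (f := g) (c := c)
      (R := R) (C := B * (2 * R)) 2 hR0 hg.diffContOnCl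
      (by
        intro z hz
        refine (hB z).trans ?_
        gcongr
        have h1 : ‖z - c‖ = R := by simpa [dist_eq_norm] using hz
        have h3 : ‖z‖ ≤ ‖z - c‖ + ‖c‖ := by simpa using norm_add_le (z - c) c
        linarith)
    rw [iteratedDeriv_succ, iteratedDeriv_one] at this
    refine this.trans (le_of_eq ?_)
    simp [Nat.factorial]
    field_simp
    ring
  have hd : Differentiable ℂ (deriv g) := by
    intro z
    exact (hg.analyticAt z).deriv.differentiableAt
  exact ⟨deriv g 0, fun z => is_const_of_deriv_eq_zero hd h2 z 0⟩

lemma indep_aux (G : MvPolynomial (Fin 2) ℂ)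
    (h : ∀ z : ℂ, MvPolynomial.eval ![z, Complex.exp z] G = 0) : G = 0 := by
  have key : ∀ x z : ℂ, MvPolynomial.eval ![x, Complex.exp z] G = 0 := by
    intro x z
    let P : Polynomial ℂ :=
      MvPolynomial.aeval ![Polynomial.X, Polynomial.C (Complex.exp z)] G
    have hP : ∀ t, P.eval t = MvPolynomial.eval ![t, Complex.exp z] G := by
      intro t
      simp only [P]
      rw [← Polynomial.coe_evalRingHom, MvPolynomial.aeval_def, MvPolynomial.hom_eval₂,
        MvPolynomial.eval, MvPolynomial.coe_eval₂Hom]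
      congr 1
      · ext; simp
      · funext i
        fin_cases i <;> simp
    have hP0 : P = 0 := by
      apply Polynomial.eq_zero_of_infinite_isRoot
      refine Set.infinite_of_injective_forall_mem
        (f := fun k : ℕ => z + k * (2 * Real.pi * Complex.I)) ?_ ?_
      · intro a b hab
        simpa [Real.pi_ne_zero] using hab
      · intro k
        show P.eval _ = 0
        rw [hP, ← h (z + k * (2 * Real.pi * Complex.I)), Complex.exp_add,
          Complex.exp_nat_mul_two_pi_mul_I, mul_one]
    rw [← hP, hP0, Polynomial.eval_zero]
  refine MvPolynomial.funext_set (fun i => {0}ᶜ) (fun _ => (Set.finite_singleton _).infinite_compl)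
    fun x hx => ?_
  have h1 : x 1 ≠ 0 := by simpa using hx 1 trivial
  have := key (x 0) (Complex.log (x 1))
  rw [Complex.exp_log h1] at this
  rw [map_zero, ← this]
  congr 2
  funext i
  fin_cases i <;> rfl

lemma coeff_X_mul_pderiv_aux (f : MvPolynomial (Fin 2) ℂ) (m : Fin 2 →₀ ℕ) :
    MvPolynomial.coeff m (MvPolynomial.X 1 * MvPolynomial.pderiv 1 f)
      = m 1 * MvPolynomial.coeff m f := by
  induction f using MvPolynomial.induction_on' with
  | add p q hp hq => simp only [map_add, mul_add, MvPolynomial.coeff_add, hp, hq]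
  | monomial n a =>
    rw [MvPolynomial.X_mul_pderiv_monomial, MvPolynomial.coeff_smul, MvPolynomial.coeff_monomial]
    split_ifs with h
    · simp [h]
    · simp

/-- Exponential Closedness for `n = 1`: an irreducible polynomial
`f ∈ ℂ[X, Y]` of positive degree in each variable has a zero of the form
`(z, exp z)`. -/
theorem exponential_closedness_dim_one (f : MvPolynomial (Fin 2) ℂ)
    (hirr : Irreducible f)
    (hX : 0 < MvPolynomial.degreeOf 0 f) (hY : 0 < MvPolynomial.degreeOf 1 f) :
    ∃ z : ℂ, MvPolynomial.eval ![z, Complex.exp z] f = 0 := by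
  by_contra! hne
  set F : ℂ → ℂ := fun z => MvPolynomial.eval ![z, Complex.exp z] f with hF
  have hFd : Differentiable ℂ F := fun z => (hasDerivAt_aux f z).differentiableAt
  have hFd' : Differentiable ℂ (deriv F) := fun z =>
    (hFd.analyticAt z).deriv.differentiableAt
  have hq : Differentiable ℂ (fun z => deriv F z / F z) := fun z =>
    (hFd' z).div (hFd z) (hne z)
  obtain ⟨g, hg0, hg⟩ := hq.isExactOn_univ.with_val_at 0 (Complex.log (F 0))
  have hgd : Differentiable ℂ g := fun z => (hg z trivial).differentiableAt
  have hFg : ∀ z, F z = Complex.exp (g z) := by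
    have hd : ∀ z, HasDerivAt (fun z => F z * Complex.exp (-g z)) 0 z := by
      intro z
      have := (hFd z).hasDerivAt.mul (hg z trivial).neg.cexp
      refine this.congr_deriv ?_
      have hz : F z ≠ 0 := hne z
      field_simp
      ring
    intro z
    have h1 := is_const_of_deriv_eq_zero (fun z => (hd z).differentiableAt)
      (fun z => (hd z).deriv) z 0
    simp only [hg0, Complex.exp_neg] at h1
    have h0 : F 0 ≠ 0 := hne 0
    rw [Complex.exp_log h0, mul_inv_cancel₀ h0] at h1
    exact (mul_inv_eq_one₀ (Complex.exp_ne_zero _)).1 h1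
  obtain ⟨C, K, hC, hK, hgr⟩ := growth_aux f
  obtain ⟨a, ha⟩ := linear_aux g hgd (|Real.log C| + K) (by positivity) (by
    intro z
    have h1 : Real.exp (g z).re ≤ C * Real.exp (K * ‖z‖) := by
      rw [← Complex.norm_exp, ← hFg]; exact hgr z
    rw [← Real.exp_log hC, ← Real.exp_add, Real.exp_le_exp] at h1
    have := le_abs_self (Real.log C)
    have := abs_nonneg (Real.log C)
    have := norm_nonneg z
    nlinarith [mul_nonneg (abs_nonneg (Real.log C)) (norm_nonneg z)])
  have hG : MvPolynomial.pderiv 0 f + MvPolynomial.X 1 * MvPolynomial.pderiv 1 f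
      - MvPolynomial.C a * f = 0 := by
    apply indep_aux
    intro z
    have h1 := (hasDerivAt_aux f z).deriv
    have h2 : deriv F z / F z = a := by rw [← ha z, (hg z trivial).deriv]
    rw [div_eq_iff (hne z)] at h2
    rw [map_sub, ← h1, map_mul, MvPolynomial.eval_C]
    exact sub_eq_zero.2 h2
  have hco : ∀ m : Fin 2 →₀ ℕ, MvPolynomial.coeff (m + Finsupp.single 0 1) f * (m 0 + 1)
      + m 1 * MvPolynomial.coeff m f - a * MvPolynomial.coeff m f = 0 := by
    intro m
    have := congrArg (MvPolynomial.coeff m) hG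
    simpa only [MvPolynomial.coeff_sub, MvPolynomial.coeff_add, MvPolynomial.coeff_pderiv,
      coeff_X_mul_pderiv_aux, MvPolynomial.coeff_C_mul, MvPolynomial.coeff_zero] using this
  have hf0 : f.support.Nonempty := MvPolynomial.support_nonempty.2 hirr.ne_zero
  obtain ⟨m, hm, hmd⟩ := Finset.exists_mem_eq_sup f.support hf0 (fun m => m 0)
  rw [← MvPolynomial.degreeOf_eq_sup] at hmd
  have hcm : MvPolynomial.coeff m f ≠ 0 := MvPolynomial.mem_support_iff.1 hm
  have h1 : MvPolynomial.coeff (m + Finsupp.single 0 1) f = 0 := by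
    by_contra hc
    have := MvPolynomial.monomial_le_degreeOf 0 (MvPolynomial.mem_support_iff.2 hc)
    simp at this
    omega
  have h2 := hco m
  rw [h1, zero_mul, zero_add, ← sub_mul] at h2
  have ham : (m 1 : ℂ) = a := by
    rcases mul_eq_zero.1 h2 with h | h
    · exact sub_eq_zero.1 h
    · exact absurd h hcm
  have hle : Finsupp.single 0 1 ≤ m := by
    rw [Finsupp.single_le_iff]; omega
  have h3 := hco (m - Finsupp.single 0 1)
  rw [tsub_add_cancel_of_le hle] at h3
  have e1 : (m - Finsupp.single 0 1 : Fin 2 →₀ ℕ) 1 = m 1 := by simp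
  rw [e1, ham, add_sub_cancel_right] at h3
  rcases mul_eq_zero.1 h3 with h | h
  · exact hcm h
  · exact Nat.cast_add_one_ne_zero _ h
end

section
/- Let t_1, ..., t_m be real numbers that are linearly independent over ℚ, and let p ∈ ℂ[w_1, ..., w_m] be a polynomial having at least two monomials with non-zero coefficients. Then the set of complex numbers z satisfying p(exp(t_1·z), ..., exp(t_m·z)) = 0 is infinite. -/
open Filter Topology Polynomial in
lemma aux_factor_one (f : ℂ → ℂ) (hf : Differentiable ℂ f) (hne : ∃ z, f z ≠ 0) (z0 : ℂ) :
    ∃ (n : ℕ) (g : ℂ → ℂ), Differentiable ℂ g ∧ g z0 ≠ 0 ∧ ∀ z, f z = (z - z0) ^ n * g z := by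
  have hA : AnalyticOnNhd ℂ f Set.univ := fun z _ => hf.analyticAt z
  have h1 : ¬ ∀ᶠ z in 𝓝 z0, f z = 0 := by
    intro h
    obtain ⟨w, hw⟩ := hne
    exact hw (hA.eqOn_zero_of_preconnected_of_eventuallyEq_zero isPreconnected_univ
      (Set.mem_univ z0) h (Set.mem_univ w))
  obtain ⟨n, g, hg, hg0, hfg⟩ := (hf.analyticAt z0).exists_eventuallyEq_pow_smul_nonzero_iff.mpr h1
  refine ⟨n, fun z => if z = z0 then g z0 else f z / (z - z0) ^ n, ?_, by simpa using hg0, ?_⟩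
  · intro z
    by_cases hz : z = z0
    · subst hz
      refine hg.differentiableAt.congr_of_eventuallyEq ?_
      filter_upwards [hfg] with w hw
      by_cases hwz : w = z
      · simp [hwz]
      · have : (w - z) ^ n ≠ 0 := pow_ne_zero _ (sub_ne_zero.mpr hwz)
        simp only [hwz, if_false, hw, smul_eq_mul]
        field_simp
    · have h2 : DifferentiableAt ℂ (fun z => f z / (z - z0) ^ n) z :=
        (hf z).div (by fun_prop) (pow_ne_zero _ (sub_ne_zero.mpr hz))
      refine h2.congr_of_eventuallyEq ?_
      filter_upwards [isOpen_ne.mem_nhds hz] with w hw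
      have : w ≠ z0 := hw
      simp [this]
  · intro z
    by_cases hz : z = z0
    · subst hz
      simpa using hfg.self_of_nhds
    · have : (z - z0) ^ n ≠ 0 := pow_ne_zero _ (sub_ne_zero.mpr hz)
      simp only [hz, if_false]
      field_simp

open Filter Topology Polynomial in
lemma aux_factor (N : ℕ) : ∀ (f : ℂ → ℂ), Differentiable ℂ f → (∃ z, f z ≠ 0) →
    {z | f z = 0}.Finite → {z | f z = 0}.ncard = N →
    ∃ (P : ℂ[X]) (F : ℂ → ℂ), P.Monic ∧ Differentiable ℂ F ∧ (∀ z, F z ≠ 0) ∧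
      ∀ z, f z = P.eval z * F z := by
  induction N with
  | zero =>
    intro f hf hne hfin hc
    rw [Set.ncard_eq_zero hfin] at hc
    refine ⟨1, f, monic_one, hf, fun z hz => ?_, by simp⟩
    have : z ∈ {z | f z = 0} := hz
    rw [hc] at this
    exact this
  | succ N ih =>
    intro f hf hne hfin hc
    obtain ⟨z0, hz0⟩ : {z | f z = 0}.Nonempty := by
      rw [← Set.ncard_pos hfin]; omega
    obtain ⟨n, g, hg, hg0, hfg⟩ := aux_factor_one f hf hne z0
    have hset : {z | g z = 0} = {z | f z = 0} \ {z0} := by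
      ext z
      simp only [Set.mem_ofPred_eq, Set.mem_sdiff, Set.mem_singleton_iff]
      constructor
      · intro h
        refine ⟨by rw [hfg, h, mul_zero], ?_⟩
        rintro rfl
        exact hg0 h
      · rintro ⟨h, hz⟩
        rw [hfg] at h
        rcases mul_eq_zero.mp h with h | h
        · exact absurd h (pow_ne_zero _ (sub_ne_zero.mpr hz))
        · exact h
    obtain ⟨P, F, hP, hF, hF0, hPF⟩ := ih g hg ⟨z0, hg0⟩ (hset ▸ hfin.subset Set.sdiff_subset)
      (by rw [hset, Set.ncard_sdiff_singleton_of_mem hz0, hc]; rfl)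
    refine ⟨(X - C z0) ^ n * P, F, ((monic_X_sub_C z0).pow n).mul hP, hF, hF0, fun z => ?_⟩
    rw [hfg, hPF]
    simp [mul_assoc]

lemma aux_log (F : ℂ → ℂ) (hF : Differentiable ℂ F) (h0 : ∀ z, F z ≠ 0) :
    ∃ g : ℂ → ℂ, Differentiable ℂ g ∧ ∀ z, F z = Complex.exp (g z) := by
  have hF' : Differentiable ℂ (deriv F) := fun z =>
    ((hF.analyticAt z).deriv).differentiableAt
  have hq : Differentiable ℂ (fun z => deriv F z / F z) := fun z => (hF' z).div (hF z) (h0 z)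
  obtain ⟨k, hk⟩ := hq.isExactOn_univ
  have hk' : ∀ z, HasDerivAt k (deriv F z / F z) z := fun z => by simpa using hk z (Set.mem_univ z)
  have hkd : Differentiable ℂ k := fun z => (hk' z).differentiableAt
  have hconst : ∀ z w, F z * Complex.exp (-k z) = F w * Complex.exp (-k w) := by
    intro z w
    refine is_const_of_deriv_eq_zero (f := fun z => F z * Complex.exp (-k z))
      (hF.mul hkd.neg.cexp) ?_ z w
    intro z
    have h := (hF z).hasDerivAt.mul ((hk' z).neg.cexp)
    refine (HasDerivAt.deriv h).trans ?_
    have := h0 z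
    field_simp
    ring
  have hc0 : F 0 * Complex.exp (-k 0) ≠ 0 := mul_ne_zero (h0 0) (Complex.exp_ne_zero _)
  refine ⟨fun z => k z + Complex.log (F 0 * Complex.exp (-k 0)), hkd.add_const _, fun z => ?_⟩
  rw [Complex.exp_add, Complex.exp_log hc0, hconst 0 z, mul_comm, mul_assoc, ← Complex.exp_add]
  simp

open Metric in
lemma aux_linear (g : ℂ → ℂ) (hg : Differentiable ℂ g) (A B : ℝ) (hA : 0 < A) (hB : 0 < B)
    (h : ∀ z, (g z).re ≤ A * ‖z‖ + B) : ∃ a b : ℂ, ∀ z, g z = a * z + b := by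
  have h1 : ∀ z, ‖g z‖ ≤ 4 * A * ‖z‖ + (2 * A * 2 + 2 * B + 3 * ‖g 0‖) := by
    intro z
    set r := ‖z‖ with hr
    have hr0 : 0 ≤ r := norm_nonneg z
    have hb := Complex.borelCaratheodory (M := A * (2 * r + 1) + B) (R := 2 * r + 1) (f := g) (z := z)
      (by positivity) hg.differentiableOn (fun w hw => by
        have hw' : ‖w‖ < 2 * r + 1 := by simpa using hw
        have := h w
        show (g w).re ≤ _
        nlinarith) (by positivity) (by simp only [mem_ball_zero_iff]; linarith)
    rw [← hr] at hb
    refine hb.trans ?_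
    have e : 2 * r + 1 - r = r + 1 := by ring
    rw [e, ← add_div, div_le_iff₀ (by positivity)]
    have := norm_nonneg (g 0)
    nlinarith [mul_nonneg hA.le hr0, mul_nonneg hB.le hr0, mul_nonneg this hr0,
      mul_nonneg (mul_nonneg hA.le hr0) hr0]
  obtain ⟨C, D, hC, hD, hCD⟩ : ∃ C D : ℝ, 0 ≤ C ∧ 0 ≤ D ∧ ∀ z, ‖g z‖ ≤ C * ‖z‖ + D :=
    ⟨_, _, by positivity, by positivity, h1⟩
  have h2 : ∀ c, ‖deriv g c‖ ≤ 2 * C + D := by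
    intro c
    have hc := norm_nonneg c
    refine (Complex.norm_deriv_le_of_forall_mem_sphere_norm_le (R := ‖c‖ + 1)
      (C := C * (2 * ‖c‖ + 1) + D) (by positivity) hg.diffContOnCl ?_).trans ?_
    · intro z hz
      have hz' : ‖z - c‖ = ‖c‖ + 1 := by simpa [dist_eq_norm] using hz
      have : ‖z‖ ≤ ‖z - c‖ + ‖c‖ := by simpa using norm_add_le (z - c) c
      have := hCD z
      nlinarith
    · rw [div_le_iff₀ (by positivity)]
      nlinarith [mul_nonneg hD hc]
  have hg' : Differentiable ℂ (deriv g) := fun z =>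
    ((hg.analyticAt z).deriv).differentiableAt
  obtain ⟨a, ha⟩ := hg'.exists_const_forall_eq_of_bounded
    (isBounded_iff_forall_norm_le.mpr ⟨2 * C + D, by rintro _ ⟨c, rfl⟩; exact h2 c⟩)
  refine ⟨a, g 0, fun z => ?_⟩
  have := is_const_of_deriv_eq_zero (f := fun z => g z - a * z) (by fun_prop) (fun z => by
    have h := (hg z).hasDerivAt.sub ((hasDerivAt_id z).const_mul a)
    refine (HasDerivAt.deriv h).trans ?_
    simp [ha]) z 0
  simp at this
  linear_combination this

open Filter Topology Polynomial in
lemma aux_structure (f : ℂ → ℂ) (hf : Differentiable ℂ f) (hne : ∃ z, f z ≠ 0)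
    (hfin : {z | f z = 0}.Finite) (A B : ℝ) (hA : 0 < A) (hB : 0 < B)
    (h : ∀ z, ‖f z‖ ≤ Real.exp (A * ‖z‖ + B)) :
    ∃ (P : ℂ[X]) (a b : ℂ), ∀ z, f z = P.eval z * Complex.exp (a * z + b) := by
  obtain ⟨P, F, hP, hF, hF0, hPF⟩ := aux_factor _ f hf hne hfin rfl
  obtain ⟨g, hg, hFg⟩ := aux_log F hF hF0
  have hlow : ∀ᶠ z in cocompact ℂ, 1 ≤ ‖P.eval z‖ := by
    by_cases hd : 0 < P.degree
    · exact (P.tendsto_norm_atTop hd (tendsto_norm_cocompact_atTop)).eventually_ge_atTop 1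
    · have : P = 1 := by
        exact hP.degree_le_zero_iff_eq_one.mp (not_lt.mp hd)
      simp [this]
  obtain ⟨K, hK, hKP⟩ := mem_cocompact.mp hlow
  obtain ⟨M, hM⟩ := hK.exists_bound_of_continuousOn hg.continuous.continuousOn
  obtain ⟨a, b, hab⟩ := aux_linear g hg A (B + |M|) hA (by positivity) (by
    intro z
    by_cases hz : z ∈ K
    · have h1 := hM z hz
      have h2 := Complex.re_le_norm (g z)
      have h3 := le_abs_self M
      have : 0 ≤ A * ‖z‖ := by positivity
      linarith
    · have h1 : 1 ≤ ‖P.eval z‖ := hKP hz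
      have h2 := h z
      rw [hPF, norm_mul, hFg, Complex.norm_exp] at h2
      have h3 : Real.exp (g z).re ≤ Real.exp (A * ‖z‖ + B) := by
        refine le_trans ?_ h2
        nlinarith [Real.exp_pos (g z).re]
      have := Real.exp_le_exp.mp h3
      have := abs_nonneg M
      linarith)
  exact ⟨P, a, b, fun z => by rw [hPF, hFg, hab]⟩

open Filter Topology Polynomial in
lemma aux_poly_decay (Q : ℂ[X]) (d : ℝ) (hd : 0 < d) :
    Tendsto (fun x : ℝ => Q.eval (x : ℂ) * Complex.exp (-(d * x : ℝ))) atTop (𝓝 0) := by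
  induction Q using Polynomial.induction_on' with
  | add p q hp hq => simpa [add_mul] using hp.add hq
  | monomial n a =>
    have h1 := Real.tendsto_pow_mul_exp_neg_atTop_nhds_zero n
    have h2 := h1.comp (tendsto_id.const_mul_atTop hd)
    have h3 := (Complex.continuous_ofReal.tendsto _).comp h2
    have h4 := h3.const_mul (a / (d : ℂ) ^ n)
    simp only [Complex.ofReal_zero, mul_zero] at h4
    refine h4.congr fun x => ?_
    have : (d : ℂ) ≠ 0 := by exact_mod_cast hd.ne'
    simp only [eval_monomial, Function.comp, id]
    push_cast
    rw [mul_pow]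
    field_simp

open Filter Topology in
lemma aux_lead {ι : Type*} (S : Finset ι) (c : ι → ℂ) (l : ι → ℝ) (k : ι) (hk : k ∈ S)
    (hmax : ∀ j ∈ S, j ≠ k → l j < l k) :
    Tendsto (fun x : ℝ => (∑ j ∈ S, c j * Complex.exp (l j * x)) * Complex.exp (-(l k * x : ℝ)))
      atTop (𝓝 (c k)) := by
  classical
  have h : ∀ j ∈ S, Tendsto (fun x : ℝ => c j * Complex.exp (l j * x) * Complex.exp (-(l k * x : ℝ)))
      atTop (𝓝 (if j = k then c k else 0)) := by
    intro j hj
    by_cases hjk : j = k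
    · subst hjk
      simp only [if_true]
      refine tendsto_const_nhds.congr fun x => ?_
      rw [mul_assoc, ← Complex.exp_add]
      simp
    · simp only [hjk, if_false]
      have := (aux_poly_decay (Polynomial.C (c j)) (l k - l j) (sub_pos.mpr (hmax j hj hjk)))
      refine this.congr fun x => ?_
      rw [Polynomial.eval_C, mul_assoc, ← Complex.exp_add]
      congr 2
      push_cast
      ring
  have h2 := tendsto_finsetSum S h
  simpa [Finset.sum_mul, hk] using h2

open Filter Topology Polynomial in
lemma aux_main {ι : Type*} (S : Finset ι) (c : ι → ℂ) (l : ι → ℝ) (hc : ∀ j ∈ S, c j ≠ 0)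
    (hinj : Set.InjOn l S) (hS : 2 ≤ S.card) :
    {z : ℂ | ∑ j ∈ S, c j * Complex.exp (l j * z) = 0}.Infinite := by
  intro hfin
  have hSne : S.Nonempty := Finset.card_pos.mp (by omega)
  obtain ⟨k, hk, hkmax⟩ := S.exists_max_image l hSne
  obtain ⟨i, hi, himin⟩ := S.exists_min_image l hSne
  have hk' : ∀ j ∈ S, j ≠ k → l j < l k := fun j hj hjk =>
    lt_of_le_of_ne (hkmax j hj) fun h => hjk (hinj hj hk h)
  have hi' : ∀ j ∈ S, j ≠ i → (-l j) < (-l i) := fun j hj hji =>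
    neg_lt_neg (lt_of_le_of_ne (himin j hj) fun h => hji (hinj hi hj h).symm)
  have hik : l i < l k := by
    obtain ⟨a, ha, b, hb, hab⟩ := Finset.one_lt_card.mp hS
    by_cases hak : a = k
    · exact (himin b hb).trans_lt (hk' b hb fun h => hab (hak.trans h.symm))
    · exact (himin a ha).trans_lt (hk' a ha hak)
  have T1 := aux_lead S c l k hk hk'
  have T2 := aux_lead S c (fun j => - l j) i hi hi'
  set f : ℂ → ℂ := fun z => ∑ j ∈ S, c j * Complex.exp (l j * z) with hfdef
  have hfd : Differentiable ℂ f := by fun_prop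
  have hne : ∃ z, f z ≠ 0 := by
    by_contra! hcon
    refine hc k hk (tendsto_nhds_unique T1 (tendsto_const_nhds.congr fun x => ?_))
    have := hcon x
    simp only [hfdef] at this
    rw [this, zero_mul]
  obtain ⟨A, hA, hAl⟩ : ∃ A : ℝ, 0 < A ∧ ∀ j ∈ S, |l j| ≤ A :=
    ⟨∑ j ∈ S, |l j| + 1, by positivity, fun j hj => by
      have := Finset.single_le_sum (f := fun j => |l j|) (fun _ _ => abs_nonneg _) hj
      linarith⟩
  have hgrow : ∀ z, ‖f z‖ ≤ Real.exp (A * ‖z‖ + (∑ j ∈ S, ‖c j‖ + 1)) := by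
    intro z
    have h1 : ‖f z‖ ≤ ∑ j ∈ S, ‖c j‖ * Real.exp (A * ‖z‖) := by
      refine (norm_sum_le _ _).trans (Finset.sum_le_sum fun j hj => ?_)
      rw [norm_mul, Complex.norm_exp]
      gcongr
      calc (l j * z : ℂ).re ≤ ‖(l j * z : ℂ)‖ := Complex.re_le_norm _
        _ = |l j| * ‖z‖ := by simp
        _ ≤ A * ‖z‖ := by gcongr; exact hAl j hj
    rw [← Finset.sum_mul] at h1
    refine h1.trans ?_
    rw [Real.exp_add, mul_comm]
    gcongr
    have := Real.add_one_le_exp (∑ j ∈ S, ‖c j‖ + 1)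
    linarith
  obtain ⟨P, a, b, hP⟩ := aux_structure f hfd hne hfin A _ hA (by positivity) hgrow
  have T3 := aux_poly_decay (P * P.comp (-X) * C (Complex.exp (2 * b))) (l k - l i) (sub_pos.mpr hik)
  have T4 := T1.mul T2
  refine mul_ne_zero (hc k hk) (hc i hi) (tendsto_nhds_unique T4 (T3.congr fun x => ?_))
  have e1 : (∑ j ∈ S, c j * Complex.exp (l j * x)) = P.eval (x : ℂ) * Complex.exp (a * x + b) :=
    hP x
  have e2 : (∑ j ∈ S, c j * Complex.exp ((-l j : ℝ) * x))
      = P.eval (-x : ℂ) * Complex.exp (a * (-x) + b) := by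
    rw [← hP (-x)]
    refine Finset.sum_congr rfl fun j _ => ?_
    push_cast
    ring_nf
  rw [e1, e2]
  simp only [eval_mul, eval_comp, eval_neg, eval_X, eval_C]
  have e3 : Complex.exp (2 * b) * Complex.exp (-((l k - l i) * x : ℝ)) =
      Complex.exp (a * x + b) * Complex.exp (-(l k * x : ℝ)) *
        (Complex.exp (a * (-x) + b) * Complex.exp (-(-l i * x : ℝ))) := by
    simp only [← Complex.exp_add]
    congr 1
    push_cast
    ring
  linear_combination (P.eval (x : ℂ) * P.eval (-x : ℂ)) * e3

/-- If `t₁, ..., tₘ` are `ℚ`-linearly independent reals and `p` is a polynomial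
with at least two monomials, then `p(e^{t₁ z}, ..., e^{tₘ z})` has infinitely
many zeroes. -/
theorem exp_poly_infinitely_many_zeroes (m : ℕ) (t : Fin m → ℝ)
    (hindep : LinearIndependent ℚ t)
    (p : MvPolynomial (Fin m) ℂ) (hp : 2 ≤ p.support.card) :
    {z : ℂ | MvPolynomial.eval (fun i => Complex.exp (t i * z)) p = 0}.Infinite := by
  have h := aux_main p.support (fun d => p.coeff d) (fun d => ∑ i, (d i : ℝ) * t i)
    (fun d hd => MvPolynomial.mem_support_iff.mp hd) (by
      intro d _ e _ hde
      have h0 := Fintype.linearIndependent_iff.mp hindep (fun i => (d i : ℚ) - e i) (by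
        simp only [Rat.smul_def, Rat.cast_sub, Rat.cast_natCast, sub_mul, Finset.sum_sub_distrib]
        exact sub_eq_zero.mpr hde)
      ext i
      exact_mod_cast sub_eq_zero.mp (h0 i)) hp
  convert h using 4 with z
  rw [MvPolynomial.eval_eq']
  refine Finset.sum_congr rfl fun d _ => ?_
  congr 1
  push_cast
  rw [Finset.sum_mul, Complex.exp_sum]
  refine Finset.prod_congr rfl fun i _ => ?_
  rw [← Complex.exp_nat_mul, mul_assoc]
end
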